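/- arXiv:1710.00640 — 9 statements merged into one kernel-verified Lean document; each statement's English description precedes it below -/
import Mathlib

section
/- For every natural number n ≥ 2, there is no continuous function r : ℂⁿ → ℂ such that for every (a₀, …, a_{n−1}) ∈ ℂⁿ, the value r(a₀, …, a_{n−1}) is a root of the polynomial zⁿ + a_{n−1}z^{n−1} + … + a₁z + a₀. -/
/-!
Applied to the polynomials `zⁿ - w` with `|w| = 1`, a continuous root becomes a continuous section
`s` of the `n`-th power map of the unit circle. That map is a covering, so `t ↦ s (exp (i t))` is
the unique lift of `t ↦ exp (i t)` starting at `s 1`, namely `t ↦ s 1 * exp (i t / n)`. The lift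
must return to `s 1` at `t = 2 π`, which forces `exp (2 π i / n) = 1` and hence `n = 1`.
-/

open Real

theorem eq_mul_circle_exp_div_of_pow_eq_exp {n : ℕ} (hn : n ≠ 0) {f : ℝ → Circle}
    (hf : Continuous f) (hpow : ∀ t, f t ^ n = Circle.exp t) (t : ℝ) :
    f t = f 0 * Circle.exp (t / n) := by
  have : NeZero n := ⟨hn⟩
  have hlift : Continuous fun t : ℝ ↦ f 0 * Circle.exp (t / n) := by fun_prop
  have hlift_pow (t : ℝ) : (f 0 * Circle.exp (t / n)) ^ n = Circle.exp t := by
    rw [mul_pow, hpow, Circle.exp_zero, one_mul, ← Circle.exp_natCast_mul,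
      mul_div_cancel₀ t (Nat.cast_ne_zero.mpr hn)]
  exact congrFun ((Circle.isQuotientCoveringMap_npow n).isCoveringMap.eq_of_comp_eq hf hlift
    (funext fun t ↦ (hpow t).trans (hlift_pow t).symm) 0 (by simp)) t

theorem eq_one_of_circle_exp_two_pi_div_eq_one {n : ℕ} (hn : n ≠ 0)
    (hexp : Circle.exp (2 * π / n) = 1) : n = 1 := by
  obtain ⟨m, hm⟩ := Circle.exp_eq_one.mp hexp
  have hmul : (m * n : ℝ) = 1 := by
    field_simp at hm
    linarith
  exact Nat.isUnit_iff.mp (Int.ofNat_isUnit.mp (.of_mul_eq_one_right m (by exact_mod_cast hmul)))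

theorem eq_one_of_continuous_pow_eq_circle_coe {n : ℕ} {s : Circle → ℂ} (hs : Continuous s)
    (hpow : ∀ z, s z ^ n = z) : n = 1 := by
  have hn : n ≠ 0 := by
    rintro rfl
    have h := hpow (-1)
    norm_num at h
  have hnorm (z : Circle) : ‖s z‖ = 1 := by
    rw [← pow_eq_one_iff_of_nonneg (norm_nonneg _) hn, ← norm_pow, hpow, Circle.norm_coe]
  let circleRoot (z : Circle) : Circle := ⟨s z, mem_sphere_zero_iff_norm.mpr (hnorm z)⟩
  have hcont : Continuous circleRoot := hs.subtype_mk _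
  have hmonodromy : circleRoot 1 = circleRoot 1 * Circle.exp (2 * π / n) := by
    simpa using eq_mul_circle_exp_div_of_pow_eq_exp hn (hcont.comp Circle.exp.continuous)
      (fun t ↦ Circle.ext (hpow (Circle.exp t))) (2 * π)
  exact eq_one_of_circle_exp_two_pi_div_eq_one hn (left_eq_mul.mp hmonodromy)

theorem sum_single_zero_mul_pow {R : Type*} [Semiring R] {n : ℕ} [NeZero n] (c x : R) :
    ∑ i : Fin n, (Pi.single 0 c : Fin n → R) i * x ^ (i : ℕ) = c := by
  have h := single_dotProduct (fun i : Fin n ↦ x ^ (i : ℕ)) c 0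
  rwa [Fin.val_zero, pow_zero, mul_one] at h

/-- For every `n ≥ 2`, there is no continuous function `r : ℂⁿ → ℂ` such that
`r (a₀, …, a_{n−1})` is a root of `zⁿ + a_{n−1}z^{n−1} + … + a₁z + a₀` for all coefficient
tuples. -/
theorem no_continuous_root_complex (n : ℕ) (hn : 2 ≤ n) :
    ¬ ∃ r : (Fin n → ℂ) → ℂ, Continuous r ∧
      ∀ a : Fin n → ℂ, (r a) ^ n + ∑ i : Fin n, a i * (r a) ^ (i : ℕ) = 0 := by
  rintro ⟨r, hr, hroot⟩
  have : NeZero n := ⟨by omega⟩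
  let s (w : Circle) : ℂ := r (Pi.single 0 (-w))
  have hs : Continuous s := hr.comp ((continuous_single 0).comp continuous_subtype_val.neg)
  have hpow (w : Circle) : s w ^ n = w := by
    have h := hroot (Pi.single 0 (-w))
    rwa [sum_single_zero_mul_pow, add_neg_eq_zero] at h
  have hn_one : n = 1 := eq_one_of_continuous_pow_eq_circle_coe hs hpow
  omega
end

section
/- For every natural number n ≥ 4, there is no continuous function r : ℝⁿ → ℂ such that for every (a₀, …, a_{n−1}) ∈ ℝⁿ, the value r(a₀, …, a_{n−1}) is a root of the polynomial zⁿ + a_{n−1}z^{n−1} + … + a₁z + a₀. -/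
/-!
For `‖c‖ < 1` the `m` roots of `(X - i) ^ m - c` lie in the open upper half plane, and for `m ≥ 2`
none of them can be chosen continuously in `c`, because `c` has no continuous `m`-th root near `0`.
Multiplying this polynomial by its conjugate gives a family of real polynomials of degree `2 * m`
without real roots. A continuous root of this family would stay in one of the two half planes, which
is impossible.

In degree `2 * m + 1`, insert a factor `X - t` with `t` real: a continuous root has to be `t` for
`‖c‖ < 1`, hence also for `‖c‖ = 1`. When `c = (-i) ^ m`, two conjugate roots have merged at `0`,
and the polynomial is `(X - t) * X ^ 2 * T` where `T` has no real roots. Thus the continuous root is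
the smallest real root of `(X + 1) * X ^ 2 * T` and the largest real root of `(X - 1) * X ^ 2 * T`.
These polynomials are the endpoints of the path `X * (X - (x - 1)) * (X - x) * T`, `0 ≤ x ≤ 1`,
along which the smallest real root `x - 1` stays away from the other real roots until it becomes `0`
at `x = 1`.
-/

open Polynomial Complex ComplexConjugate Metric Set

/-- A continuous root of the family of monic polynomials of degree `n` with real coefficients, which
are listed from the constant one upwards, without the leading one. -/
structure IsContinuousRoot (n : ℕ) (r : (Fin n → ℝ) → ℂ) : Prop where
  continuous : Continuous r
  pow_add_sum_eq_zero (a : Fin n → ℝ) :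
    (r a) ^ n + ∑ i : Fin n, (a i : ℂ) * (r a) ^ (i : ℕ) = 0

/-- The value of `r` at the first `n` coefficients of a polynomial. Polynomials with real
coefficients are taken in `ℂ[X]`, where they can be factored; the imaginary parts are dropped. -/
def rootOf {n : ℕ} (r : (Fin n → ℝ) → ℂ) (p : ℂ[X]) : ℂ :=
  r fun i => (p.coeff i).re

/-- Continuity of a family of polynomials, coefficient by coefficient. -/
def ContinuousCoeff {α R : Type*} [TopologicalSpace α] [Semiring R] [TopologicalSpace R]
    (p : α → R[X]) : Prop :=
  ∀ k, Continuous fun a => (p a).coeff k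

/-- The product of `p` with its complex conjugate, a polynomial with real coefficients. -/
noncomputable def mulConj (p : ℂ[X]) : ℂ[X] :=
  p * p.map (starRingEnd ℂ)

namespace ContinuousCoeff

variable {α R : Type*} [TopologicalSpace α] [TopologicalSpace R]

theorem const [Semiring R] (p : R[X]) : ContinuousCoeff fun _ : α => p :=
  fun _ => continuous_const

theorem C_of_continuous [Semiring R] {f : α → R} (hf : Continuous f) :
    ContinuousCoeff fun a => C (f a) := by
  intro k
  simp only [coeff_C]
  split_ifs <;> fun_prop

theorem sub [Ring R] [ContinuousSub R] {p q : α → R[X]} (hp : ContinuousCoeff p)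
    (hq : ContinuousCoeff q) : ContinuousCoeff fun a => p a - q a := by
  intro k
  simp only [coeff_sub]
  exact (hp k).sub (hq k)

theorem mul [Semiring R] [IsTopologicalSemiring R] {p q : α → R[X]} (hp : ContinuousCoeff p)
    (hq : ContinuousCoeff q) : ContinuousCoeff fun a => p a * q a := by
  intro k
  simp only [coeff_mul]
  exact continuous_finsetSum _ fun ij _ => (hp ij.1).mul (hq ij.2)

theorem mulConj {p : α → ℂ[X]} (hp : ContinuousCoeff p) :
    ContinuousCoeff fun a => mulConj (p a) := by
  refine hp.mul fun k => ?_
  simp only [coeff_map]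
  exact continuous_conj.comp (hp k)

end ContinuousCoeff

namespace IsContinuousRoot

variable {n : ℕ} {r : (Fin n → ℝ) → ℂ}

theorem isRoot_rootOf (hr : IsContinuousRoot n r) {p : ℂ[X]} (hp : IsMonicOfDegree p n)
    (hreal : p.map (starRingEnd ℂ) = p) : p.IsRoot (rootOf r p) := by
  have coeff_re (k : ℕ) : ((p.coeff k).re : ℂ) = p.coeff k := by
    rw [← conj_eq_iff_re, ← coeff_map, hreal]
  have eval_eq (z : ℂ) : p.eval z = z ^ n + ∑ i : Fin n, p.coeff i * z ^ (i : ℕ) := by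
    have hlead : p.coeff n = 1 := hp.natDegree_eq ▸ hp.monic.coeff_natDegree
    rw [eval_eq_sum_range, hp.natDegree_eq, Finset.sum_range_succ, hlead, one_mul, add_comm,
      Finset.sum_range]
  rw [IsRoot.def, eval_eq]
  simpa only [coeff_re, rootOf] using hr.pow_add_sum_eq_zero fun i => (p.coeff i).re

theorem continuous_rootOf (hr : IsContinuousRoot n r) {α : Type*} [TopologicalSpace α]
    {p : α → ℂ[X]} (hp : ContinuousCoeff p) : Continuous fun a => rootOf r (p a) :=
  hr.continuous.comp (continuous_pi fun i => continuous_re.comp (hp i))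

end IsContinuousRoot

theorem map_conj_mulConj (p : ℂ[X]) : (mulConj p).map (starRingEnd ℂ) = mulConj p := by
  simp [mulConj, Polynomial.map_map, mul_comm]

theorem mulConj_X_mul (p : ℂ[X]) : mulConj (X * p) = X ^ 2 * mulConj p := by
  simp only [mulConj, Polynomial.map_mul, map_X]
  ring

theorem isMonicOfDegree_mulConj {p : ℂ[X]} {k : ℕ} (hp : IsMonicOfDegree p k) :
    IsMonicOfDegree (mulConj p) (2 * k) := by
  have hconj : IsMonicOfDegree (p.map (starRingEnd ℂ)) k :=
    ⟨by rw [natDegree_map, hp.natDegree_eq], hp.monic.map _⟩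
  simpa only [mulConj, two_mul] using hp.mul hconj

theorem isRoot_mulConj_iff {p : ℂ[X]} {z : ℂ} :
    (mulConj p).IsRoot z ↔ p.IsRoot z ∨ p.IsRoot (conj z) := by
  have hconj : (p.map (starRingEnd ℂ)).IsRoot z ↔ p.IsRoot (conj z) := by
    simpa using isRoot_map_iff (x := conj z) (p := p) (starRingEnd ℂ).injective
  rw [mulConj, root_mul, hconj]

theorem div_eq_div_of_pow_eq_pow_on_isPreconnected {α K : Type*} [TopologicalSpace α] [Field K]
    [TopologicalSpace K] [T1Space K] [ContinuousMul K] [ContinuousInv₀ K] {S : Set α}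
    (hS : IsPreconnected S) {f g : α → K} (hf : ContinuousOn f S) (hg : ContinuousOn g S) {m : ℕ}
    (hm : m ≠ 0) (hpow : ∀ x ∈ S, f x ^ m = g x ^ m) (hg0 : ∀ x ∈ S, g x ≠ 0) {x y : α}
    (hx : x ∈ S) (hy : y ∈ S) : f x / g x = f y / g y := by
  have hunity : MapsTo (fun x => f x / g x) S (nthRootsFinset m (1 : K)) := fun x hx => by
    rw [Finset.mem_coe, mem_nthRootsFinset (Nat.pos_of_ne_zero hm), div_pow, hpow x hx,
      div_self (pow_ne_zero m (hg0 x hx))]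
  exact hS.constant_of_mapsTo (Finset.finite_toSet _).isDiscrete (hf.div hg hg0) hunity hx hy

theorem exists_pow_ne_of_continuousOn_sphere {m : ℕ} (hm : 2 ≤ m) {R : ℝ} (hR : 0 < R) {w : ℂ → ℂ}
    (hw : ContinuousOn w (sphere 0 R)) : ∃ c ∈ sphere (0 : ℂ) R, w c ^ m ≠ c := by
  by_contra! hpow
  have hm0 : m ≠ 0 := by omega
  obtain ⟨u, hu⟩ := IsAlgClosed.exists_pow_nat_eq (R : ℂ) (Nat.pos_of_ne_zero hm0)
  have norm_u : ‖u‖ ^ m = R := by rw [← norm_pow, hu, norm_real, Real.norm_of_nonneg hR.le]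
  have hu0 : u ≠ 0 := by
    rintro rfl
    exact hR.ne' (by simpa [hm0] using norm_u.symm)
  have hmaps : MapsTo (fun v => v ^ m) (sphere (0 : ℂ) ‖u‖) (sphere 0 R) := fun v hv => by
    rw [mem_sphere_zero_iff_norm] at hv ⊢
    rw [norm_pow, hv, norm_u]
  have hζ := isPrimitiveRoot_exp m hm0
  set ζ := exp (2 * Real.pi * I / m)
  have hu_mem : u ∈ sphere (0 : ℂ) ‖u‖ := by simp
  have hζu_mem : ζ * u ∈ sphere (0 : ℂ) ‖u‖ := by simp [hζ.norm'_eq_one hm0]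
  -- `w (v ^ m) / v` is constant in `v`, yet replacing `v` by `ζ * v` divides it by `ζ`.
  have hconst : w (u ^ m) / u = w ((ζ * u) ^ m) / (ζ * u) :=
    div_eq_div_of_pow_eq_pow_on_isPreconnected
      (isPreconnected_sphere (by simp [rank_real_complex]) 0 ‖u‖)
      (hw.comp (by fun_prop) hmaps) continuousOn_id hm0 (fun v hv => hpow _ (hmaps hv))
      (fun v hv => ne_zero_of_mem_sphere (norm_ne_zero_iff.mpr hu0) ⟨v, hv⟩) hu_mem hζu_mem
  rw [mul_pow, hζ.pow_eq_one, one_mul] at hconst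
  have hwu : w (u ^ m) ≠ 0 := ne_zero_pow hm0 <| by
    rw [hpow _ (hmaps hu_mem)]
    exact pow_ne_zero m hu0
  have hζ0 : ζ ≠ 0 := hζ.ne_zero hm0
  have hζ1 : ζ = 1 := by
    field_simp at hconst
    exact hconst
  exact hζ.ne_one (by omega) hζ1

theorem subset_or_subset_or_subset_of_isPreconnected {α : Type*} [TopologicalSpace α]
    {S A B D : Set α} (hS : IsPreconnected S) (hA : IsClosed A) (hB : IsClosed B) (hD : IsClosed D)
    (hcover : S ⊆ A ∪ B ∪ D) (hAB : S ∩ (A ∩ B) = ∅) (hAD : S ∩ (A ∩ D) = ∅)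
    (hBD : S ∩ (B ∩ D) = ∅) : S ⊆ A ∨ S ⊆ B ∨ S ⊆ D := by
  have hABD : S ∩ ((A ∪ B) ∩ D) = ∅ := by
    rw [union_inter_distrib_right, inter_union_distrib_left, hAD, hBD, union_self]
  rw [← or_assoc]
  rw [isPreconnected_iff_subset_of_disjoint_closed] at hS
  exact (hS _ _ (hA.union hB) hD hcover hABD).imp_left fun h => hS _ _ hA hB h hAB

section ShiftedRootPoly

/-- The monic polynomial of degree `m` whose roots are the translates by `i` of the `m`-th roots
of `c`. -/
noncomputable def shiftedRootPoly (m : ℕ) (c : ℂ) : ℂ[X] :=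
  (X - C I) ^ m - C c

variable {m : ℕ}

theorem isRoot_shiftedRootPoly_iff {c z : ℂ} :
    (shiftedRootPoly m c).IsRoot z ↔ (z - I) ^ m = c := by
  simp [shiftedRootPoly, sub_eq_zero]

theorem isMonicOfDegree_shiftedRootPoly (hm : m ≠ 0) (c : ℂ) :
    IsMonicOfDegree (shiftedRootPoly m c) m := by
  have hpow : IsMonicOfDegree ((X - C I) ^ m) m := by
    simpa using (isMonicOfDegree_X_sub_one I).pow m
  exact hpow.sub (by simpa using Nat.pos_of_ne_zero hm)

theorem continuousCoeff_shiftedRootPoly : ContinuousCoeff (shiftedRootPoly m) :=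
  (ContinuousCoeff.const _).sub (.C_of_continuous continuous_id)

theorem isClosed_setOf_isRoot_shiftedRootPoly {f : ℂ → ℂ} (hf : Continuous f) :
    IsClosed {c | (shiftedRootPoly m c).IsRoot (f c)} := by
  simp only [isRoot_shiftedRootPoly_iff]
  exact isClosed_eq (by fun_prop) continuous_id

theorem im_pos_of_isRoot_shiftedRootPoly {c z : ℂ} (hc : ‖c‖ < 1)
    (hz : (shiftedRootPoly m c).IsRoot z) : 0 < z.im := by
  rw [isRoot_shiftedRootPoly_iff] at hz
  have hdist : ‖z - I‖ < 1 := by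
    refine lt_of_pow_lt_pow_left₀ m zero_le_one ?_
    rwa [← norm_pow, hz, one_pow]
  have him : |z.im - 1| < 1 := by simpa using (abs_im_le_norm (z - I)).trans_lt hdist
  linarith [(abs_lt.mp him).1]

theorem exists_not_isRoot_shiftedRootPoly (hm : 2 ≤ m) {f : ℂ → ℂ} (hf : Continuous f) :
    ∃ c ∈ ball (0 : ℂ) 1, ¬ (shiftedRootPoly m c).IsRoot (f c) := by
  obtain ⟨c, hc, hne⟩ := exists_pow_ne_of_continuousOn_sphere hm one_half_pos
    (w := fun c => f c - I) (by fun_prop)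
  exact ⟨c, sphere_subset_ball (by norm_num) hc, by rwa [isRoot_shiftedRootPoly_iff]⟩

theorem isRoot_of_isRoot_mul_mulConj_shiftedRootPoly (hm : 2 ≤ m) {g : ℂ[X]}
    (hg : ∀ z, g.IsRoot z → z.im = 0) {f : ℂ → ℂ} (hf : Continuous f)
    (hroot : ∀ c, (g * mulConj (shiftedRootPoly m c)).IsRoot (f c)) {c : ℂ}
    (hc : c ∈ closedBall 0 1) : g.IsRoot (f c) := by
  let upper : Set ℂ := {c | (shiftedRootPoly m c).IsRoot (f c)}
  let lower : Set ℂ := {c | (shiftedRootPoly m c).IsRoot (conj (f c))}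
  let real : Set ℂ := {c | g.IsRoot (f c)}
  have hf' : Continuous fun c => conj (f c) := continuous_conj.comp hf
  have isClosed_upper : IsClosed upper := isClosed_setOf_isRoot_shiftedRootPoly hf
  have isClosed_lower : IsClosed lower := isClosed_setOf_isRoot_shiftedRootPoly hf'
  have isClosed_real : IsClosed real := isClosed_eq (g.continuous.comp hf) continuous_const
  have im_pos {c : ℂ} (hc : c ∈ ball 0 1) (hu : c ∈ upper) : 0 < (f c).im :=
    im_pos_of_isRoot_shiftedRootPoly (mem_ball_zero_iff.mp hc) hu
  have im_neg {c : ℂ} (hc : c ∈ ball 0 1) (hl : c ∈ lower) : (f c).im < 0 := by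
    simpa using im_pos_of_isRoot_shiftedRootPoly (mem_ball_zero_iff.mp hc) hl
  have hcover : ball 0 1 ⊆ upper ∪ lower ∪ real := fun c _ =>
    (root_mul.mp (hroot c)).symm.imp_left isRoot_mulConj_iff.mp
  rcases subset_or_subset_or_subset_of_isPreconnected (convex_ball 0 1).isPreconnected
    isClosed_upper isClosed_lower isClosed_real hcover
    (eq_empty_of_forall_notMem fun c ⟨hc, hu, hl⟩ => (im_pos hc hu).not_gt (im_neg hc hl))
    (eq_empty_of_forall_notMem fun c ⟨hc, hu, hr⟩ => (im_pos hc hu).ne' (hg _ hr))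
    (eq_empty_of_forall_notMem fun c ⟨hc, hl, hr⟩ => (im_neg hc hl).ne (hg _ hr))
    with hupper | hlower | hreal
  · obtain ⟨c, hc, hne⟩ := exists_not_isRoot_shiftedRootPoly hm hf
    exact absurd (hupper hc) hne
  · obtain ⟨c, hc, hne⟩ := exists_not_isRoot_shiftedRootPoly hm hf'
    exact absurd (hlower hc) hne
  · rw [← closure_ball 0 one_ne_zero] at hc
    exact closure_minimal hreal isClosed_real hc

theorem exists_shiftedRootPoly_eq_X_mul (hm : m ≠ 0) :
    ∃ s : ℂ[X], shiftedRootPoly m ((-I) ^ m) = X * s ∧ ∀ x : ℝ, ¬ s.IsRoot x := by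
  have hX : X ∣ shiftedRootPoly m ((-I) ^ m) := by
    simp [X_dvd_iff, coeff_zero_eq_eval_zero, shiftedRootPoly]
  obtain ⟨s, hs⟩ := hX
  refine ⟨s, hs, fun x hx => ?_⟩
  have hroot : (x - I) ^ m = (-I) ^ m := by
    rw [← isRoot_shiftedRootPoly_iff, hs, root_mul]
    exact .inr hx
  have hnorm : ‖(x : ℂ) - I‖ = 1 := by
    refine (pow_eq_one_iff_of_nonneg (norm_nonneg _) hm).mp ?_
    rw [← norm_pow, hroot, norm_pow, norm_neg, norm_I, one_pow]
  have hx0 : x = 0 := by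
    have hsq := Complex.sq_norm ((x : ℂ) - I)
    rw [hnorm, normSq_apply] at hsq
    simpa using hsq
  -- A second root at `0` would make the derivative of `(X - I) ^ m` vanish there.
  have hderiv : s.eval 0 = m * (-I) ^ (m - 1) := by
    simpa [shiftedRootPoly, derivative_pow] using
      (congrArg (eval 0) (congrArg derivative hs)).symm
  rw [hx0, ofReal_zero, IsRoot.def, hderiv] at hx
  simp [hm] at hx

end ShiftedRootPoly

section CubicPath

/-- A path of cubics with real roots `x - 1`, `0`, `x`, which joins `(X + 1) * X ^ 2` at `x = 0` to
`X ^ 2 * (X - 1)` at `x = 1`. -/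
noncomputable def cubicPath (x : ℝ) : ℂ[X] :=
  X * (X - C ((x - 1 : ℝ) : ℂ)) * (X - C (x : ℂ))

variable {f : ℝ → ℂ}

theorem isRoot_cubicPath_iff {x : ℝ} {z : ℂ} :
    (cubicPath x).IsRoot z ↔ z = 0 ∨ z = (x - 1 : ℝ) ∨ z = x := by
  simp [cubicPath, sub_eq_zero, or_assoc]

theorem cubicPath_zero : cubicPath 0 = (X - C ((-1 : ℝ) : ℂ)) * X ^ 2 := by
  rw [cubicPath, zero_sub, ofReal_zero, C_0]
  ring

theorem cubicPath_one : cubicPath 1 = (X - C ((1 : ℝ) : ℂ)) * X ^ 2 := by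
  rw [cubicPath, sub_self, ofReal_zero, C_0]
  ring

theorem isMonicOfDegree_cubicPath (x : ℝ) : IsMonicOfDegree (cubicPath x) 3 :=
  ((isMonicOfDegree_X ℂ).mul (isMonicOfDegree_X_sub_one _)).mul (isMonicOfDegree_X_sub_one _)

theorem map_conj_cubicPath (x : ℝ) : (cubicPath x).map (starRingEnd ℂ) = cubicPath x := by
  simp [cubicPath]

theorem continuousCoeff_cubicPath : ContinuousCoeff cubicPath := by
  have hX_sub_C {g : ℝ → ℂ} (hg : Continuous g) : ContinuousCoeff fun x => X - C (g x) :=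
    (ContinuousCoeff.const X).sub (.C_of_continuous hg)
  exact ((ContinuousCoeff.const X).mul (hX_sub_C (by fun_prop))).mul (hX_sub_C (by fun_prop))

theorem isRoot_cubicPath_of_isRoot_mul (hf : Continuous f) {T : ℂ[X]} (hT : ∀ x : ℝ, ¬ T.IsRoot x)
    (hroot : ∀ x, (cubicPath x * T).IsRoot (f x)) {x₀ : ℝ} (hx₀ : ¬ T.IsRoot (f x₀)) (x : ℝ) :
    (cubicPath x).IsRoot (f x) := by
  have isClosed_cubic : IsClosed {x | (cubicPath x).IsRoot (f x)} := by
    simp only [isRoot_cubicPath_iff]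
    exact (isClosed_eq (by fun_prop) (by fun_prop)).union
      ((isClosed_eq (by fun_prop) (by fun_prop)).union (isClosed_eq (by fun_prop) (by fun_prop)))
  have isClosed_T : IsClosed {x | T.IsRoot (f x)} :=
    isClosed_eq (T.continuous.comp hf) continuous_const
  have hdisj (x : ℝ) (hx : (cubicPath x).IsRoot (f x)) : ¬ T.IsRoot (f x) := by
    rcases isRoot_cubicPath_iff.mp hx with h | h | h
    · simpa [h] using hT 0
    · exact h ▸ hT (x - 1)
    · exact h ▸ hT x
  have hcubic_or_T := isPreconnected_iff_subset_of_disjoint_closed.mp isPreconnected_univ _ _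
    isClosed_cubic isClosed_T (fun x _ => root_mul.mp (hroot x))
    (eq_empty_of_forall_notMem fun x ⟨_, hx, hxT⟩ => hdisj x hx hxT)
  exact hcubic_or_T.resolve_right (fun h => hx₀ (h (mem_univ x₀))) (mem_univ x)

theorem ne_one_of_isRoot_cubicPath (hf : Continuous f) (hroot : ∀ x, (cubicPath x).IsRoot (f x))
    (h0 : f 0 = -1) : f 1 ≠ 1 := by
  intro h1
  have hre : Continuous fun x => (f x).re := continuous_re.comp hf
  -- `(x - 1) / 2` separates the root `x - 1` from the roots `0` and `x`.
  obtain ⟨x, hx, hfx⟩ := intermediate_value_Icc zero_le_one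
    (hre.sub (g := fun x => (x - 1) / 2) (by fun_prop)).continuousOn
    (show (0 : ℝ) ∈ Icc _ _ by norm_num [h0, h1])
  have hfx_re : (f x).re = (x - 1) / 2 := sub_eq_zero.mp hfx
  have hx1 : x = 1 := by
    rcases isRoot_cubicPath_iff.mp (hroot x) with h | h | h <;>
      simp only [h, zero_re, ofReal_re] at hfx_re <;> linarith [hx.1]
  simp [hx1, h1] at hfx_re

end CubicPath

theorem not_isContinuousRoot_two_mul {m : ℕ} (hm : 2 ≤ m) {r : (Fin (2 * m) → ℝ) → ℂ} :
    ¬ IsContinuousRoot (2 * m) r := by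
  intro hr
  have hroot (c : ℂ) : (1 * mulConj (shiftedRootPoly m c)).IsRoot
      (rootOf r (mulConj (shiftedRootPoly m c))) := by
    rw [one_mul]
    exact hr.isRoot_rootOf (isMonicOfDegree_mulConj (isMonicOfDegree_shiftedRootPoly (by omega) c))
      (map_conj_mulConj _)
  have hone := isRoot_of_isRoot_mul_mulConj_shiftedRootPoly hm (by simp)
    (hr.continuous_rootOf continuousCoeff_shiftedRootPoly.mulConj) hroot
    (mem_closedBall_self zero_le_one)
  simp at hone

section OddDegree

variable {m : ℕ} {r : (Fin (2 * m + 1) → ℝ) → ℂ}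

theorem rootOf_X_sub_C_mul_mulConj_shiftedRootPoly (hr : IsContinuousRoot (2 * m + 1) r)
    (hm : 2 ≤ m) (t : ℝ) {c : ℂ} (hc : c ∈ closedBall 0 1) :
    rootOf r ((X - C (t : ℂ)) * mulConj (shiftedRootPoly m c)) = t := by
  have hroot (c : ℂ) := hr.isRoot_rootOf
    (p := (X - C (t : ℂ)) * mulConj (shiftedRootPoly m c))
    (by
      rw [add_comm]
      exact (isMonicOfDegree_X_sub_one _).mul
        (isMonicOfDegree_mulConj (isMonicOfDegree_shiftedRootPoly (by omega) c)))
    (by simp [map_conj_mulConj])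
  have ht := isRoot_of_isRoot_mul_mulConj_shiftedRootPoly hm
    (fun z hz => by rw [← root_X_sub_C.mp hz, ofReal_im])
    (hr.continuous_rootOf ((ContinuousCoeff.const _).mul continuousCoeff_shiftedRootPoly.mulConj))
    hroot hc
  exact (root_X_sub_C.mp ht).symm

theorem not_isContinuousRoot_two_mul_add_one (hm : 2 ≤ m) : ¬ IsContinuousRoot (2 * m + 1) r := by
  intro hr
  obtain ⟨s, hs, hs_real⟩ := exists_shiftedRootPoly_eq_X_mul (m := m) (by omega)
  have hdouble (t : ℝ) : rootOf r ((X - C (t : ℂ)) * mulConj (X * s)) = t :=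
    hs ▸ rootOf_X_sub_C_mul_mulConj_shiftedRootPoly hr hm t (by simp)
  have hT (x : ℝ) : ¬ (mulConj s).IsRoot x := by
    rw [isRoot_mulConj_iff, conj_ofReal, or_self]
    exact hs_real x
  have hs_deg : IsMonicOfDegree s (m - 1) := by
    refine (isMonicOfDegree_X ℂ).of_mul_left ?_
    rw [← hs, Nat.add_sub_cancel' (by omega)]
    exact isMonicOfDegree_shiftedRootPoly (by omega) _
  have hroot (x : ℝ) := hr.isRoot_rootOf (p := cubicPath x * mulConj s)
    (by
      convert (isMonicOfDegree_cubicPath x).mul (isMonicOfDegree_mulConj hs_deg) using 1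
      omega)
    (by rw [Polynomial.map_mul, map_conj_cubicPath, map_conj_mulConj])
  have hcont := hr.continuous_rootOf
    (continuousCoeff_cubicPath.mul (ContinuousCoeff.const (mulConj s)))
  have hstart : rootOf r (cubicPath 0 * mulConj s) = (-1 : ℝ) := by
    rw [← hdouble (-1), mulConj_X_mul, cubicPath_zero, mul_assoc]
  have hend : rootOf r (cubicPath 1 * mulConj s) = (1 : ℝ) := by
    rw [← hdouble 1, mulConj_X_mul, cubicPath_one, mul_assoc]
  have hcubic := isRoot_cubicPath_of_isRoot_mul hcont hT hroot (x₀ := 0) (hstart ▸ hT (-1))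
  exact ne_one_of_isRoot_cubicPath hcont hcubic (by simpa using hstart) (by simpa using hend)

end OddDegree

/-- For every `n ≥ 4`, there is no continuous function `r : ℝⁿ → ℂ` such that
`r (a₀, …, a_{n−1})` is a root of `zⁿ + a_{n−1}z^{n−1} + … + a₁z + a₀` for all real coefficient
tuples. -/
theorem no_continuous_root_real (n : ℕ) (hn : 4 ≤ n) :
    ¬ ∃ r : (Fin n → ℝ) → ℂ, Continuous r ∧
      ∀ a : Fin n → ℝ, (r a) ^ n + ∑ i : Fin n, (a i : ℂ) * (r a) ^ (i : ℕ) = 0 := by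
  rintro ⟨r, hcont, hroot⟩
  have hr : IsContinuousRoot n r := ⟨hcont, hroot⟩
  obtain ⟨m, rfl | rfl⟩ := Nat.even_or_odd' n
  · exact not_isContinuousRoot_two_mul (by omega) hr
  · exact not_isContinuousRoot_two_mul_add_one (by omega) hr
end

section
/- The function r : ℝ² → ℂ defined by r(a₀, a₁) = −a₁/2 − √(a₁² − 4a₀)/2 when a₁² − 4a₀ ≥ 0, and r(a₀, a₁) = −a₁/2 + i·√(4a₀ − a₁²)/2 when a₁² − 4a₀ < 0, is continuous on ℝ², and r(a₀, a₁)² + a₁·r(a₀, a₁) + a₀ = 0 for every (a₀, a₁) ∈ ℝ². -/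
/-- The root of the monic real quadratic `z² + a₁z + a₀` given by
`−a₁/2 − √(a₁² − 4a₀)/2` when `a₁² − 4a₀ ≥ 0` and `−a₁/2 + i·√(4a₀ − a₁²)/2` otherwise. -/
noncomputable def rQuadMinus : ℝ × ℝ → ℂ := fun p =>
  if p.2 ^ 2 - 4 * p.1 ≥ 0 then
    -(p.2 : ℂ) / 2 - (Real.sqrt (p.2 ^ 2 - 4 * p.1) : ℂ) / 2
  else
    -(p.2 : ℂ) / 2 + Complex.I * (Real.sqrt (4 * p.1 - p.2 ^ 2) : ℂ) / 2

/-- The square root of a real number lying in the closed second quadrant of `ℂ`: `-√x` for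
`0 ≤ x` and `i√(-x)` for `x ≤ 0`. Since `Real.sqrt` vanishes on negative numbers, one formula
covers both cases, which makes continuity at `0` evident. -/
noncomputable def secondQuadrantSqrt (x : ℝ) : ℂ :=
  -(√x : ℂ) + Complex.I * (√(-x) : ℂ)

namespace secondQuadrantSqrt

variable {x : ℝ}

theorem of_nonneg (hx : 0 ≤ x) : secondQuadrantSqrt x = -(√x : ℂ) := by
  simp [secondQuadrantSqrt, Real.sqrt_eq_zero_of_nonpos (neg_nonpos.mpr hx)]

theorem of_nonpos (hx : x ≤ 0) : secondQuadrantSqrt x = Complex.I * (√(-x) : ℂ) := by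
  simp [secondQuadrantSqrt, Real.sqrt_eq_zero_of_nonpos hx]

theorem mul_self (x : ℝ) : secondQuadrantSqrt x * secondQuadrantSqrt x = x := by
  rcases le_total 0 x with hx | hx
  · rw [of_nonneg hx, neg_mul_neg, ← Complex.ofReal_mul, Real.mul_self_sqrt hx]
  · rw [of_nonpos hx, mul_mul_mul_comm, Complex.I_mul_I, ← Complex.ofReal_mul,
      Real.mul_self_sqrt (neg_nonneg.mpr hx), Complex.ofReal_neg, neg_one_mul, neg_neg]

@[fun_prop]
theorem continuous : Continuous secondQuadrantSqrt := by
  unfold secondQuadrantSqrt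
  fun_prop

end secondQuadrantSqrt

theorem rQuadMinus_eq_secondQuadrantSqrt (p : ℝ × ℝ) :
    rQuadMinus p = (-(p.2 : ℂ) + secondQuadrantSqrt (p.2 ^ 2 - 4 * p.1)) / 2 := by
  unfold rQuadMinus
  split_ifs with hD
  · rw [secondQuadrantSqrt.of_nonneg hD]
    ring
  · rw [secondQuadrantSqrt.of_nonpos (not_le.mp hD).le, neg_sub]
    ring

theorem continuous_rQuadMinus : Continuous rQuadMinus := by
  rw [funext rQuadMinus_eq_secondQuadrantSqrt]
  fun_prop

theorem rQuadMinus_quadratic_eq_zero (a₀ a₁ : ℝ) :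
    rQuadMinus (a₀, a₁) ^ 2 + (a₁ : ℂ) * rQuadMinus (a₀, a₁) + (a₀ : ℂ) = 0 := by
  have discrim_eq : discrim 1 (a₁ : ℂ) a₀ =
      secondQuadrantSqrt (a₁ ^ 2 - 4 * a₀) * secondQuadrantSqrt (a₁ ^ 2 - 4 * a₀) := by
    simp [discrim, secondQuadrantSqrt.mul_self]
  have quadratic_eq_zero := (quadratic_eq_zero_iff one_ne_zero discrim_eq (rQuadMinus (a₀, a₁))).mpr
    (Or.inl (by rw [rQuadMinus_eq_secondQuadrantSqrt, mul_one]))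
  rwa [one_mul, ← sq] at quadratic_eq_zero

/-- The function `rQuadMinus` is continuous on `ℝ²` and at every `(a₀, a₁)` it takes a value
which is a root of `z² + a₁z + a₀`. -/
theorem rQuadMinus_continuous_root :
    Continuous rQuadMinus ∧
      ∀ a₀ a₁ : ℝ,
        (rQuadMinus (a₀, a₁)) ^ 2 + (a₁ : ℂ) * rQuadMinus (a₀, a₁) + (a₀ : ℂ) = 0 :=
  ⟨continuous_rQuadMinus, rQuadMinus_quadratic_eq_zero⟩
end

section
/- A function r : ℝ² → ℂ is continuous and satisfies r(a₀, a₁)² + a₁·r(a₀, a₁) + a₀ = 0 for every (a₀, a₁) ∈ ℝ² if and only if there exist signs ε, δ ∈ {−1, +1} such that r(a₀, a₁) = −a₁/2 + ε·√(a₁² − 4a₀)/2 whenever a₁² − 4a₀ ≥ 0, and r(a₀, a₁) = −a₁/2 + δ·i·√(4a₀ − a₁²)/2 whenever a₁² − 4a₀ < 0. In particular, the family of monic real quadratics has exactly four continuous roots. -/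
/-- For signs `ε, δ ∈ {−1, +1}`, the root `r_{ε,δ}` of the monic real quadratic
`z² + a₁z + a₀`: it equals `−a₁/2 + ε·√(D)/2` when `D := a₁² − 4a₀ ≥ 0` and
`−a₁/2 + δ·i·√(−D)/2` when `D < 0`. -/
noncomputable def rQuad (ε δ : ℝ) : ℝ × ℝ → ℂ := fun p =>
  if p.2 ^ 2 - 4 * p.1 ≥ 0 then
    -(p.2 : ℂ) / 2 + (ε : ℂ) * (Real.sqrt (p.2 ^ 2 - 4 * p.1) : ℂ) / 2
  else
    -(p.2 : ℂ) / 2 + (δ : ℂ) * Complex.I * (Real.sqrt (4 * p.1 - p.2 ^ 2) : ℂ) / 2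

/-!
Completing the square turns roots of `z² + a₁z + a₀` into square roots of the discriminant `D`.
A continuous square root of a real function `D` agrees up to sign with `√D` where `D > 0` and with
`i√(-D)` where `D < 0`; the sign is constant on each of these sets when it is preconnected, and
both branches vanish where `D = 0`. For the discriminant on `ℝ²` the two sets are the sides of a
parabola, which the shear `(t, a₁) ↦ (t + a₁² / 4, a₁)` straightens to half-planes.
-/

open Complex Set

/-- The square root of the real number `x` in `ℂ` with sign `ε` on the positive and `δ` on the
negative half-line. Since `Real.sqrt` vanishes on negative numbers, at most one of the two summands
is nonzero, so no case distinction is needed. -/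
noncomputable def signedSqrt (ε δ x : ℝ) : ℂ :=
  ε * √x + δ * I * √(-x)

section SignedSqrt

variable {ε δ x : ℝ}

theorem signedSqrt_of_nonneg (hx : 0 ≤ x) : signedSqrt ε δ x = ε * √x := by
  simp [signedSqrt, Real.sqrt_eq_zero_of_nonpos (neg_nonpos.mpr hx)]

theorem signedSqrt_of_nonpos (hx : x ≤ 0) : signedSqrt ε δ x = δ * I * √(-x) := by
  simp [signedSqrt, Real.sqrt_eq_zero_of_nonpos hx]

theorem continuous_signedSqrt (ε δ : ℝ) : Continuous (signedSqrt ε δ) := by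
  unfold signedSqrt
  fun_prop

theorem ofReal_sqrt_sq (hx : 0 ≤ x) : (√x : ℂ) ^ 2 = x := by
  rw [← ofReal_pow, Real.sq_sqrt hx]

theorem I_mul_ofReal_sqrt_neg_sq (hx : x ≤ 0) : (I * √(-x)) ^ 2 = x := by
  rw [mul_pow, I_sq, ofReal_sqrt_sq (neg_nonneg.mpr hx), ofReal_neg, neg_one_mul, neg_neg]

theorem signedSqrt_sq (hε : ε = -1 ∨ ε = 1) (hδ : δ = -1 ∨ δ = 1) (x : ℝ) :
    signedSqrt ε δ x ^ 2 = x := by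
  rcases le_total 0 x with hx | hx
  · rw [signedSqrt_of_nonneg hx, mul_pow, ofReal_sqrt_sq hx]
    rcases hε with rfl | rfl <;> simp
  · rw [signedSqrt_of_nonpos hx, mul_assoc, mul_pow, I_mul_ofReal_sqrt_neg_sq hx]
    rcases hδ with rfl | rfl <;> simp

theorem rQuad_eq_signedSqrt (ε δ : ℝ) (p : ℝ × ℝ) :
    rQuad ε δ p = (signedSqrt ε δ (p.2 ^ 2 - 4 * p.1) - p.2) / 2 := by
  unfold rQuad
  split_ifs with hD
  · rw [signedSqrt_of_nonneg hD]
    ring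
  · rw [signedSqrt_of_nonpos (not_le.mp hD).le, neg_sub]
    ring

end SignedSqrt

section SquareRoots

variable {X : Type*} [TopologicalSpace X]

theorem exists_sign_eqOn_of_sq_eq {S : Set X} (hS : IsPreconnected S) {f g : X → ℂ}
    (hf : ContinuousOn f S) (hg : ContinuousOn g S) (hsq : ∀ x ∈ S, f x ^ 2 = g x ^ 2)
    (hg₀ : ∀ x ∈ S, g x ≠ 0) :
    ∃ ε : ℝ, (ε = -1 ∨ ε = 1) ∧ ∀ x ∈ S, f x = ε * g x := by
  rcases hS.eq_or_eq_neg_of_sq_eq hf hg hsq (hg₀ _) with hfg | hfg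
  · exact ⟨1, .inr rfl, fun x hx => by simpa using hfg hx⟩
  · exact ⟨-1, .inl rfl, fun x hx => by simpa using hfg hx⟩

variable {D : X → ℝ} {f : X → ℂ}

theorem exists_signedSqrt_of_continuous_of_sq_eq (hD : Continuous D)
    (hpos : IsPreconnected {x | 0 < D x}) (hneg : IsPreconnected {x | D x < 0})
    (hf : Continuous f) (hsq : ∀ x, f x ^ 2 = D x) :
    ∃ ε δ : ℝ, (ε = -1 ∨ ε = 1) ∧ (δ = -1 ∨ δ = 1) ∧ ∀ x, f x = signedSqrt ε δ (D x) := by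
  obtain ⟨ε, hε, hfε⟩ := exists_sign_eqOn_of_sq_eq hpos (g := fun x => (√(D x) : ℂ))
    hf.continuousOn (by fun_prop)
    (fun x (hx : 0 < D x) => by rw [hsq, ofReal_sqrt_sq hx.le])
    (fun x hx => ofReal_ne_zero.mpr (Real.sqrt_pos.mpr hx).ne')
  obtain ⟨δ, hδ, hfδ⟩ := exists_sign_eqOn_of_sq_eq hneg (g := fun x => I * √(-D x))
    hf.continuousOn (by fun_prop)
    (fun x (hx : D x < 0) => by rw [hsq, I_mul_ofReal_sqrt_neg_sq hx.le])
    (fun x hx => mul_ne_zero I_ne_zero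
      (ofReal_ne_zero.mpr (Real.sqrt_pos.mpr (neg_pos.mpr hx)).ne'))
  refine ⟨ε, δ, hε, hδ, fun x => ?_⟩
  rcases lt_trichotomy (D x) 0 with hx | hx | hx
  · rw [hfδ x hx, signedSqrt_of_nonpos hx.le, mul_assoc]
  · have hfx : f x = 0 := by simpa [hx] using hsq x
    simp [hfx, hx, signedSqrt]
  · rw [hfε x hx, signedSqrt_of_nonneg hx.le]

theorem continuous_and_sq_eq_iff_exists_signedSqrt (hD : Continuous D)
    (hpos : IsPreconnected {x | 0 < D x}) (hneg : IsPreconnected {x | D x < 0}) :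
    (Continuous f ∧ ∀ x, f x ^ 2 = D x) ↔
      ∃ ε δ : ℝ, (ε = -1 ∨ ε = 1) ∧ (δ = -1 ∨ δ = 1) ∧ ∀ x, f x = signedSqrt ε δ (D x) := by
  refine ⟨fun ⟨hf, hsq⟩ => exists_signedSqrt_of_continuous_of_sq_eq hD hpos hneg hf hsq, ?_⟩
  rintro ⟨ε, δ, hε, hδ, hf⟩
  refine ⟨?_, fun x => by rw [hf, signedSqrt_sq hε hδ]⟩
  rw [funext hf]
  exact (continuous_signedSqrt ε δ).comp hD

end SquareRoots

theorem isPreconnected_setOf_fst_sub_mem {G Y : Type*} [TopologicalSpace G] [AddGroup G]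
    [ContinuousAdd G] [TopologicalSpace Y] [PreconnectedSpace Y] {s : Set G}
    (hs : IsPreconnected s) {g : Y → G} (hg : Continuous g) :
    IsPreconnected {p : G × Y | p.1 - g p.2 ∈ s} := by
  have himage : (fun q : G × Y => (q.1 + g q.2, q.2)) '' (s ×ˢ univ) =
      {p | p.1 - g p.2 ∈ s} := by
    ext p
    constructor
    · rintro ⟨q, ⟨hq, -⟩, rfl⟩
      simpa using hq
    · intro hp
      exact ⟨(p.1 - g p.2, p.2), ⟨hp, mem_univ _⟩, by simp⟩
  rw [← himage]
  exact (hs.prod isPreconnected_univ).image _ (by fun_prop)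

theorem isPreconnected_setOf_discrim_pos :
    IsPreconnected {p : ℝ × ℝ | 0 < p.2 ^ 2 - 4 * p.1} := by
  convert isPreconnected_setOf_fst_sub_mem (isPreconnected_Iio (a := (0 : ℝ)))
    (g := fun a₁ : ℝ => a₁ ^ 2 / 4) (by fun_prop) using 3 with p
  rw [mem_Iio]
  constructor <;> intro h <;> linarith

theorem isPreconnected_setOf_discrim_neg :
    IsPreconnected {p : ℝ × ℝ | p.2 ^ 2 - 4 * p.1 < 0} := by
  convert isPreconnected_setOf_fst_sub_mem (isPreconnected_Ioi (a := (0 : ℝ)))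
    (g := fun a₁ : ℝ => a₁ ^ 2 / 4) (by fun_prop) using 3 with p
  rw [mem_Ioi]
  constructor <;> intro h <;> linarith

theorem monic_quadratic_eq_zero_iff_sq_eq (a₀ a₁ : ℝ) (z : ℂ) :
    z ^ 2 + a₁ * z + a₀ = 0 ↔ (2 * z + a₁) ^ 2 = (a₁ ^ 2 - 4 * a₀ : ℝ) := by
  push_cast
  constructor <;> intro h
  · linear_combination 4 * h
  · linear_combination h / 4

theorem continuous_root_quadratic_real_iff_general {X : Type*} [TopologicalSpace X]
    {a₀ a₁ : X → ℝ} (ha₀ : Continuous a₀) (ha₁ : Continuous a₁)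
    (hpos : IsPreconnected {x | 0 < a₁ x ^ 2 - 4 * a₀ x})
    (hneg : IsPreconnected {x | a₁ x ^ 2 - 4 * a₀ x < 0}) (r : X → ℂ) :
    (Continuous r ∧ ∀ x, r x ^ 2 + a₁ x * r x + a₀ x = 0) ↔
      ∃ ε δ : ℝ, (ε = -1 ∨ ε = 1) ∧ (δ = -1 ∨ δ = 1) ∧
        r = fun x => rQuad ε δ (a₀ x, a₁ x) := by
  have hcont : Continuous r ↔ Continuous fun x => 2 * r x + (a₁ x : ℂ) := by
    refine ⟨fun hr => by fun_prop, fun h => ?_⟩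
    have hr : r = fun x => (2 * r x + (a₁ x : ℂ) - a₁ x) / 2 := by simp
    rw [hr]
    fun_prop
  have hroot (ε δ : ℝ) (x : X) : r x = rQuad ε δ (a₀ x, a₁ x) ↔
      2 * r x + a₁ x = signedSqrt ε δ (a₁ x ^ 2 - 4 * a₀ x) := by
    rw [rQuad_eq_signedSqrt, eq_div_iff two_ne_zero, eq_sub_iff_add_eq, mul_comm]
  simp only [hcont, monic_quadratic_eq_zero_iff_sq_eq, funext_iff, hroot]
  exact continuous_and_sq_eq_iff_exists_signedSqrt (by fun_prop) hpos hneg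

/-- A function `r : ℝ² → ℂ` is a continuous root of the family of monic real quadratics if and
only if `r = r_{ε,δ}` for some signs `ε, δ ∈ {−1, +1}`. -/
theorem continuous_root_quadratic_real_iff (r : ℝ × ℝ → ℂ) :
    (Continuous r ∧
        ∀ a₀ a₁ : ℝ, (r (a₀, a₁)) ^ 2 + (a₁ : ℂ) * r (a₀, a₁) + (a₀ : ℂ) = 0) ↔
      ∃ ε δ : ℝ, (ε = -1 ∨ ε = 1) ∧ (δ = -1 ∨ δ = 1) ∧ r = rQuad ε δ := by
  simpa only [Prod.forall] using continuous_root_quadratic_real_iff_general continuous_fst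
    continuous_snd isPreconnected_setOf_discrim_pos isPreconnected_setOf_discrim_neg r
end

section
/- For every natural number n ≥ 1 and every point M₀ ∈ ℂⁿ, there exist n functions z¹, …, zⁿ : ℂⁿ → ℂ, each continuous at the point M₀, such that for all M = (a₀, …, a_{n−1}) ∈ ℂⁿ and all z ∈ ℂ, zⁿ + a_{n−1}z^{n−1} + … + a₁z + a₀ = (z − z¹(M))·…·(z − zⁿ(M)). -/
/-!
A monic polynomial `p` of degree `d` that splits satisfies `‖p(a)‖ = ∏ ‖a - b‖` over its roots `b`,
so some root lies within `‖p(a)‖ ^ (1 / d)` of `a`. If `a` is a root of the polynomial at the base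
point, choosing such a root at every parameter therefore gives a root function that is continuous
at the base point. The coefficients of the quotient by the corresponding linear factor are again
continuous there, and one concludes by induction on the degree.
-/

open Filter Polynomial Topology

section RootNearPoint

variable {T K : Type*} [NormedField K]

theorem exists_mem_roots_norm_sub_pow_natDegree_le {p : K[X]} (hp : p.Monic) (hs : p.Splits)
    (hd : p.natDegree ≠ 0) (a : K) :
    ∃ b ∈ p.roots, ‖a - b‖ ^ p.natDegree ≤ ‖p.eval a‖ := by
  classical
  have roots_ne_zero : p.roots ≠ 0 := hs.roots_ne_zero hd
  obtain ⟨b, hb, hmin⟩ := p.roots.toFinset.exists_min_image (fun b ↦ ‖a - b‖)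
    (Multiset.toFinset_nonempty.2 roots_ne_zero)
  simp only [Multiset.mem_toFinset] at hb hmin
  refine ⟨b, hb, ?_⟩
  calc ‖a - b‖ ^ p.natDegree
      = (p.roots.map fun _ ↦ ‖a - b‖).prod := by simp [hs.natDegree_eq_card_roots]
    _ ≤ (p.roots.map fun c ↦ ‖a - c‖).prod :=
        Multiset.prod_map_le_prod_map₀ _ _ (fun _ _ ↦ norm_nonneg _) hmin
    _ = ‖p.eval a‖ := by
        rw [hs.eval_eq_prod_roots_of_monic hp]
        exact p.roots.prod_hom' (normHom : K →*₀ ℝ) (fun c ↦ a - c)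

theorem exists_forall_mem_roots_tendsto {P : T → K[X]} {n : ℕ} (hn : n ≠ 0)
    (hmonic : ∀ t, (P t).Monic) (hdeg : ∀ t, (P t).natDegree = n) (hsplits : ∀ t, (P t).Splits)
    {l : Filter T} {a : K} (ha : Tendsto (fun t ↦ (P t).eval a) l (𝓝 0)) :
    ∃ w : T → K, (∀ t, w t ∈ (P t).roots) ∧ Tendsto w l (𝓝 a) := by
  choose w hw hbound using fun t ↦
    exists_mem_roots_norm_sub_pow_natDegree_le (hmonic t) (hsplits t) (by rwa [hdeg]) a
  refine ⟨w, hw, Metric.tendsto_nhds.2 fun ε hε ↦ ?_⟩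
  filter_upwards [ha.norm.eventually_lt_const (by simpa using pow_pos hε n)] with t ht
  rw [dist_comm, dist_eq_norm]
  exact lt_of_pow_lt_pow_left₀ n hε.le ((hdeg t ▸ hbound t).trans_lt ht)

end RootNearPoint

section CoefficientContinuity

variable {T R : Type*} [TopologicalSpace T] [TopologicalSpace R] {n : ℕ} {t₀ : T} {w : T → R}

theorem continuousAt_eval_of_continuousAt_coeff [Semiring R] [IsTopologicalSemiring R]
    {P : T → R[X]} (hdeg : ∀ t, (P t).natDegree ≤ n)
    (hcoeff : ∀ k, ContinuousAt (fun t ↦ (P t).coeff k) t₀) (hw : ContinuousAt w t₀) :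
    ContinuousAt (fun t ↦ (P t).eval (w t)) t₀ := by
  simp only [fun t ↦ eval_eq_sum_range' (Nat.lt_succ_of_le (hdeg t))]
  fun_prop

theorem continuousAt_coeff_divByMonic_X_sub_C [CommRing R] [IsTopologicalRing R]
    {P : T → R[X]} (hdeg : ∀ t, (P t).natDegree ≤ n)
    (hcoeff : ∀ k, ContinuousAt (fun t ↦ (P t).coeff k) t₀) (hw : ContinuousAt w t₀) (k : ℕ) :
    ContinuousAt (fun t ↦ (P t /ₘ (X - C (w t))).coeff k) t₀ := by
  have coeff_eq (t : T) : (P t /ₘ (X - C (w t))).coeff k =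
      ∑ i ∈ Finset.Icc (k + 1) n, w t ^ (i - (k + 1)) * (P t).coeff i := by
    rw [coeff_divByMonic_X_sub_C]
    refine Finset.sum_subset (Finset.Icc_subset_Icc_right (hdeg t)) fun i hi hi' ↦ ?_
    rw [coeff_eq_zero_of_natDegree_lt (by grind), mul_zero]
  simp only [coeff_eq]
  fun_prop

end CoefficientContinuity

theorem exists_continuousAt_forall_eq_prod_X_sub_C {T K : Type*} [TopologicalSpace T]
    [NormedField K] {n : ℕ} {P : T → K[X]} {t₀ : T} (hmonic : ∀ t, (P t).Monic)
    (hdeg : ∀ t, (P t).natDegree = n) (hsplits : ∀ t, (P t).Splits)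
    (hcoeff : ∀ k, ContinuousAt (fun t ↦ (P t).coeff k) t₀) :
    ∃ r : Fin n → T → K,
      (∀ i, ContinuousAt (r i) t₀) ∧ ∀ t, P t = ∏ i, (X - C (r i t)) := by
  induction n generalizing P with
  | zero =>
    have hP (t : T) : P t = 1 := (hmonic t).natDegree_eq_zero.1 (hdeg t)
    exact ⟨Fin.elim0, (Fin.elim0 ·), by simpa using hP⟩
  | succ n ih =>
    have hdeg_le (t : T) : (P t).natDegree ≤ n + 1 := (hdeg t).le
    obtain ⟨a, ha⟩ := (hsplits t₀).exists_eval_eq_zero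
      (natDegree_pos_iff_degree_pos.1 (by simp [hdeg])).ne'
    have heval : Tendsto (fun t ↦ (P t).eval a) (𝓝 t₀) (𝓝 0) := by
      simpa only [ContinuousAt, ha] using
        continuousAt_eval_of_continuousAt_coeff hdeg_le hcoeff (continuousAt_const (y := a))
    obtain ⟨w, hroot, hlim⟩ :=
      exists_forall_mem_roots_tendsto n.succ_ne_zero hmonic hdeg hsplits heval
    have hw : ContinuousAt w t₀ := continuousAt_of_tendsto_nhds hlim
    let Q (t : T) : K[X] := P t /ₘ (X - C (w t))
    have hPQ (t : T) : (X - C (w t)) * Q t = P t :=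
      mul_divByMonic_eq_iff_isRoot.2 (isRoot_of_mem_roots (hroot t))
    have hQmonic (t : T) : (Q t).Monic :=
      (monic_X_sub_C (w t)).of_mul_monic_left (hPQ t ▸ hmonic t)
    have hQdeg (t : T) : (Q t).natDegree = n := by
      simp [Q, natDegree_divByMonic, monic_X_sub_C, hdeg]
    have hQsplits (t : T) : (Q t).Splits :=
      (hsplits t).of_dvd (hmonic t).ne_zero (Dvd.intro_left _ (hPQ t))
    obtain ⟨r, hr, hfactor⟩ := ih hQmonic hQdeg hQsplits
      (continuousAt_coeff_divByMonic_X_sub_C hdeg_le hcoeff hw)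
    refine ⟨Fin.cons w r, Fin.cases hw hr, fun t ↦ ?_⟩
    rw [← hPQ, hfactor, Fin.prod_univ_succ]
    simp

theorem eval_map_eval_freeMonic {R : Type*} [CommRing R] {n : ℕ} (M : Fin n → R) (z : R) :
    ((freeMonic R n).map (MvPolynomial.eval M)).eval z =
      z ^ n + ∑ i : Fin n, M i * z ^ (i : ℕ) := by
  simp [freeMonic, eval_finsetSum, Polynomial.map_sum]

theorem exists_full_tuple_of_roots_continuousAt_general {K : Type*} [NormedField K]
    [IsAlgClosed K] (n : ℕ) (M₀ : Fin n → K) :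
    ∃ r : Fin n → (Fin n → K) → K,
      (∀ i : Fin n, ContinuousAt (r i) M₀) ∧
      ∀ M : Fin n → K, ∀ z : K,
        z ^ n + ∑ i : Fin n, M i * z ^ (i : ℕ) = ∏ i : Fin n, (z - r i M) := by
  obtain ⟨r, hr, hfactor⟩ := exists_continuousAt_forall_eq_prod_X_sub_C (t₀ := M₀)
    (P := fun M ↦ (freeMonic K n).map (MvPolynomial.eval M)) (fun _ ↦ (monic_freeMonic K n).map _)
    (fun _ ↦ by rw [(monic_freeMonic K n).natDegree_map, natDegree_freeMonic])
    (fun _ ↦ IsAlgClosed.splits _)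
    (fun _ ↦ by simpa only [coeff_map] using (MvPolynomial.continuous_eval _).continuousAt)
  refine ⟨r, hr, fun M z ↦ ?_⟩
  rw [← eval_map_eval_freeMonic, hfactor, eval_prod]
  simp only [eval_sub, eval_X, eval_C]

/-- For every `n ≥ 1` and every point `M₀ ∈ ℂⁿ`, there exist `n` functions `ℂⁿ → ℂ`, each
continuous at `M₀`, giving a full factorization of `zⁿ + a_{n−1}z^{n−1} + … + a₀` at every
coefficient tuple. -/
theorem exists_full_tuple_of_roots_continuousAt (n : ℕ) (hn : 1 ≤ n) (M₀ : Fin n → ℂ) :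
    ∃ r : Fin n → (Fin n → ℂ) → ℂ,
      (∀ i : Fin n, ContinuousAt (r i) M₀) ∧
      ∀ M : Fin n → ℂ, ∀ z : ℂ,
        z ^ n + ∑ i : Fin n, M i * z ^ (i : ℕ) = ∏ i : Fin n, (z - r i M) :=
  exists_full_tuple_of_roots_continuousAt_general n M₀
end

section
/- Let n ≥ 1 be a natural number, α < β real numbers, and a₀, …, a_{n−1} : [α, β] → ℂ continuous functions. Then there exist continuous functions x₁, …, xₙ : [α, β] → ℂ such that for every t ∈ [α, β] and every x ∈ ℂ, xⁿ + a_{n−1}(t)x^{n−1} + … + a₁(t)x + a₀(t) = (x − x₁(t))·…·(x − xₙ(t)). -/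
/-!
One continuous root is found by following roots greedily: along a finite set of parameters, pick in
each root set a point nearest to the previous choice. A root set has at most `n` points, so on an
interval where the root sets stay within `ε` of each other the greedy choice drifts by at most
`3nε`, however many parameters were used. Rado's selection principle yields a selection on the whole
parameter set which on each finite set agrees with some greedy choice; it obeys the same bound and
is therefore continuous. Dividing by `X - r(t)` keeps the coefficients continuous, and induction on
the degree gives the remaining roots.
-/

open Filter Finset Polynomial Set Topology

section Selection

variable {I T X : Type*} [LinearOrder I] [LinearOrder T] [PseudoMetricSpace X]

lemma exists_nearest_selection [WellFoundedLT I] {R : I → Finset X}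
    (hne : ∀ i, (R i).Nonempty) :
    ∃ f : ∀ i, R i, ∀ i j, i ⋖ j → ∀ y ∈ R j, dist (f i : X) (f j) ≤ dist (f i : X) y := by
  have hnear (j : I) (x : X) : ∃ z : R j, ∀ y ∈ R j, dist x z ≤ dist x y := by
    obtain ⟨z, hz, hmin⟩ := (R j).exists_min_image (dist x) (hne j)
    exact ⟨⟨z, hz⟩, hmin⟩
  choose nearest h_nearest using hnear
  classical
  let step (j : I) (f : ∀ i < j, R i) : R j :=
    if h : ∃ i, i ⋖ j then nearest j (f h.choose h.choose_spec.lt) else ⟨_, (hne j).choose_spec⟩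
  let f : ∀ i, R i := wellFounded_lt.fix step
  refine ⟨f, fun i j hij y hy => ?_⟩
  have hex : ∃ k, k ⋖ j := ⟨i, hij⟩
  have hfj : f j = nearest j (f i) := by
    have hfix : f j = step j fun k _ => f k := wellFounded_lt.fix_eq step j
    rw [hfix, ← hex.choose_spec.unique_left hij]
    exact dif_pos hex
  rw [hfj]
  exact h_nearest j (f i) y hy

lemma dist_le_three_mul_card_mul_of_covBy [Finite I] {f : I → X} {ε : ℝ} {t : I} (A : Finset X)
    {s : I} (hst : s ≤ t) (hnear : ∀ u ∈ Set.Icc s t, ∃ p ∈ A, dist (f u) p ≤ ε)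
    (hstep : ∀ u v, s ≤ u → u ⋖ v → v ≤ t → dist (f u) (f v) ≤ ε) :
    dist (f s) (f t) ≤ 3 * #A * ε := by
  classical
  induction A using Finset.strongInduction generalizing s with
  | H A ih =>
    -- Jump to the last time `u` spent near `p`; after it only the points of `A.erase p` matter.
    obtain ⟨p, hpA, hsp⟩ := hnear s ⟨le_rfl, hst⟩
    have hε : 0 ≤ ε := dist_nonneg.trans hsp
    obtain ⟨u, ⟨⟨hsu, hut⟩, hup⟩, hlast⟩ :=
      (Set.toFinite {u | u ∈ Set.Icc s t ∧ dist (f u) p ≤ ε}).exists_maximal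
        ⟨s, ⟨le_rfl, hst⟩, hsp⟩
    have hcard : (#A : ℝ) = #(A.erase p) + 1 := by
      exact_mod_cast (card_erase_add_one hpA).symm
    have hdist_su : dist (f s) (f u) ≤ 2 * ε := by
      linarith [dist_triangle_right (f s) (f u) p]
    obtain rfl | hut := hut.eq_or_lt
    · rw [hcard]
      have : 0 ≤ (#(A.erase p) : ℝ) * ε := by positivity
      linarith
    obtain ⟨v, huv, hvt⟩ := exists_covBy_le_of_lt hut
    have hdist_vt : dist (f v) (f t) ≤ 3 * #(A.erase p) * ε := by
      refine ih _ (erase_ssubset hpA) hvt (fun w hw => ?_) fun w w' hw =>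
        hstep w w' (hsu.trans (huv.le.trans hw))
      have huw : u < w := huv.lt.trans_le hw.1
      obtain ⟨q, hqA, hwq⟩ := hnear w ⟨hsu.trans huw.le, hw.2⟩
      have hqp : q ≠ p := by
        rintro rfl
        exact huw.not_ge (hlast ⟨⟨hsu.trans huw.le, hw.2⟩, hwq⟩ huw.le)
      exact ⟨q, mem_erase.2 ⟨hqp, hqA⟩, hwq⟩
    calc dist (f s) (f t)
      _ ≤ dist (f s) (f u) + dist (f u) (f v) + dist (f v) (f t) := dist_triangle4 _ _ _ _
      _ ≤ 2 * ε + ε + 3 * #(A.erase p) * ε := by gcongr; exact hstep u v hsu huv hvt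
      _ = 3 * #A * ε := by rw [hcard]; ring

theorem exists_selection_dist_le_three_mul_card_mul {R : T → Finset X}
    (hne : ∀ t, (R t).Nonempty) :
    ∃ f : ∀ t, R t, ∀ s t, s ≤ t → ∀ ε : ℝ,
      (∀ u ∈ Set.Icc s t, ∀ v ∈ Set.Icc s t, ∀ x ∈ R u, ∃ y ∈ R v, dist x y ≤ ε) →
      dist (f s : X) (f t) ≤ 3 * #(R s) * ε := by
  choose g hg using fun F : Finset T => exists_nearest_selection fun i : F => hne i
  obtain ⟨f, hf⟩ := rado_selection_subtype (β := fun t => R t) g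
  refine ⟨f, fun s t hst ε hosc => ?_⟩
  obtain ⟨F, hF, hfg⟩ := hf {s, t}
  let s' : F := ⟨s, hF (by simp)⟩
  let t' : F := ⟨t, hF (by simp)⟩
  have hfs : f s = g F s' := hfg ⟨s, by simp⟩
  have hft : f t = g F t' := hfg ⟨t, by simp⟩
  rw [hfs, hft]
  refine dist_le_three_mul_card_mul_of_covBy (f := fun u : F => (g F u : X)) (s := s') (t := t')
    (R s) hst ?_ ?_
  · exact fun u hu => hosc u hu s ⟨le_rfl, hst⟩ _ (g F u).2
  · intro u v hsu huv hvt
    have hut : u ≤ t' := huv.le.trans hvt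
    obtain ⟨y, hy, hdist⟩ := hosc u ⟨hsu, hut⟩ v ⟨hsu.trans huv.le, hvt⟩ _ (g F u).2
    exact (hg F u v huv y hy).trans hdist

theorem exists_continuous_selection [TopologicalSpace T]
    [∀ t : T, TendstoIxxClass Set.Icc (𝓝 t) (𝓝 t)] {R : T → Finset X} {n : ℕ}
    (hne : ∀ t, (R t).Nonempty) (hcard : ∀ t, #(R t) ≤ n)
    (hR : ∀ t, ∀ ε > 0, ∀ᶠ p in 𝓝 t ×ˢ 𝓝 t, ∀ x ∈ R p.1, ∃ y ∈ R p.2, dist x y ≤ ε) :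
    ∃ f : T → X, Continuous f ∧ ∀ t, f t ∈ R t := by
  obtain ⟨f, hf⟩ := exists_selection_dist_le_three_mul_card_mul hne
  refine ⟨fun t => f t, continuous_iff_continuousAt.2 fun t => ?_, fun t => (f t).2⟩
  refine Metric.continuousAt_iff'.2 fun ε hε => ?_
  set η : ℝ := ε / (3 * n + 1)
  have hη : 0 < η := by positivity
  obtain ⟨V, hV, hosc⟩ := eventually_prod_self_iff'.1 (hR t η hη)
  have hdist {u v : T} (huv : u ≤ v) (hsub : Set.Icc u v ⊆ V) : dist (f u : X) (f v) < ε :=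
    calc dist (f u : X) (f v)
      _ ≤ 3 * #(R u) * η := hf u v huv η fun a ha b hb => hosc a (hsub ha) b (hsub hb)
      _ ≤ 3 * n * η := by gcongr; exact hcard u
      _ < (3 * n + 1) * η := by linarith
      _ = ε := by simp only [η]; field_simp
  have hsub : ∀ᶠ s in 𝓝 t, Set.uIcc s t ⊆ V :=
    (tendsto_id.uIcc tendsto_const_nhds).eventually (eventually_smallSets_subset.2 hV)
  filter_upwards [hsub] with s hs
  obtain hst | hts := le_total s t
  · exact hdist hst (Set.uIcc_of_le hst ▸ hs)
  · rw [dist_comm]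
    exact hdist hts (Set.uIcc_of_ge hts ▸ hs)

end Selection

section Roots

variable {A K T : Type*} [TopologicalSpace T]

lemma continuous_coeff_divByMonic_X_sub_C [Ring A] [TopologicalSpace A] [IsTopologicalSemiring A]
    {P : T → A[X]} {n : ℕ} (hdeg : ∀ t, (P t).natDegree = n)
    (hcoeff : ∀ i, Continuous fun t => (P t).coeff i) {r : T → A} (hr : Continuous r) (i : ℕ) :
    Continuous fun t => (P t /ₘ (X - C (r t))).coeff i := by
  simp only [coeff_divByMonic_X_sub_C, hdeg]
  fun_prop

variable [NormedField K]

lemma norm_le_sum_norm_coeff_add_one_of_isRoot {p : K[X]} (hp : p.Monic) {z : K}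
    (hz : p.IsRoot z) : ‖z‖ ≤ ∑ i ∈ range p.natDegree, ‖p.coeff i‖ + 1 := by
  have hsup : (range p.natDegree).sup (fun i => ‖p.coeff i‖₊) ≤
      ∑ i ∈ range p.natDegree, ‖p.coeff i‖₊ :=
    Finset.sup_le fun i hi => single_le_sum (f := fun i => ‖p.coeff i‖₊) (by simp) hi
  have hcauchy : ‖z‖₊ ≤ ∑ i ∈ range p.natDegree, ‖p.coeff i‖₊ + 1 :=
    calc ‖z‖₊
      _ ≤ cauchyBound p := (hz.norm_lt_cauchyBound hp.ne_zero).le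
      _ = (range p.natDegree).sup (fun i => ‖p.coeff i‖₊) + 1 := by
        simp only [cauchyBound, hp.leadingCoeff, nnnorm_one, div_one]
      _ ≤ ∑ i ∈ range p.natDegree, ‖p.coeff i‖₊ + 1 := by gcongr
  simpa only [← NNReal.coe_le_coe, NNReal.coe_add, NNReal.coe_sum, NNReal.coe_one, coe_nnnorm]
    using hcauchy

lemma exists_pos_forall_exists_mem_roots_dist_lt (n : ℕ) (B : ℝ) {ε : ℝ} (hε : 0 < ε) :
    ∃ η > 0, ∀ p q : K[X], p.Monic → q.Monic → p.natDegree = n → q.natDegree = n → q.Splits →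
      (∀ i, ‖q.coeff i - p.coeff i‖ < η) → ∀ x, p.IsRoot x → ‖x‖ ≤ B →
      ∃ y ∈ q.roots, dist x y < ε := by
  set r : ℝ := ε / max B 1
  have hr : 0 < r := by positivity
  refine ⟨r ^ n / (n + 1), by positivity, fun p q hp hq hpn hqn hsplits hclose x hx hxB => ?_⟩
  have hn : n ≠ 0 := by
    rintro rfl
    simp [hp.natDegree_eq_zero.1 hpn] at hx
  obtain ⟨y, hy, hxy⟩ := exists_roots_norm_sub_lt_of_norm_coeff_sub_lt (by positivity) hx hp hq
    (hqn.trans hpn.symm) hclose hsplits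
  refine ⟨y, hy, ?_⟩
  rw [hpn, mul_div_cancel₀ _ (by positivity), Real.pow_rpow_inv_natCast hr.le hn] at hxy
  calc dist x y
    _ = ‖x - y‖ := dist_eq_norm x y
    _ < r * max ‖x‖ 1 := hxy
    _ ≤ r * max B 1 := by gcongr
    _ = ε := div_mul_cancel₀ _ (by positivity)

variable {P : T → K[X]} {n : ℕ}

lemma exists_eventually_forall_isRoot_norm_le {t₀ : T} (hmonic : ∀ t, (P t).Monic)
    (hdeg : ∀ t, (P t).natDegree = n) (hcoeff : ∀ i, ContinuousAt (fun t => (P t).coeff i) t₀) :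
    ∃ B, ∀ᶠ t in 𝓝 t₀, ∀ z, (P t).IsRoot z → ‖z‖ ≤ B := by
  let b (t : T) : ℝ := ∑ i ∈ range n, ‖(P t).coeff i‖ + 1
  have hb : ContinuousAt b t₀ := by fun_prop
  have hroot (t : T) (z : K) (hz : (P t).IsRoot z) : ‖z‖ ≤ b t := by
    simpa only [hdeg] using norm_le_sum_norm_coeff_add_one_of_isRoot (hmonic t) hz
  refine ⟨b t₀ + 1, ?_⟩
  filter_upwards [hb.eventually_lt_const (lt_add_one (b t₀))] with t ht z hz
  exact (hroot t z hz).trans ht.le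

lemma eventually_forall_norm_coeff_sub_lt {t₀ : T} (hdeg : ∀ t, (P t).natDegree ≤ n)
    (hcoeff : ∀ i, ContinuousAt (fun t => (P t).coeff i) t₀) {η : ℝ} (hη : 0 < η) :
    ∀ᶠ p in 𝓝 t₀ ×ˢ 𝓝 t₀, ∀ i, ‖(P p.2).coeff i - (P p.1).coeff i‖ < η := by
  have hlow : ∀ᶠ p in 𝓝 t₀ ×ˢ 𝓝 t₀, ∀ i ∈ range (n + 1),
      ‖(P p.2).coeff i - (P p.1).coeff i‖ < η := by
    refine (eventually_all_finset _).2 fun i _ => ?_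
    have hlim : Tendsto (fun p : T × T => ‖(P p.2).coeff i - (P p.1).coeff i‖)
        (𝓝 t₀ ×ˢ 𝓝 t₀) (𝓝 0) := by
      simpa using (((hcoeff i).tendsto.comp tendsto_snd).sub
        ((hcoeff i).tendsto.comp tendsto_fst)).norm
    exact hlim.eventually_lt_const hη
  filter_upwards [hlow] with p hp i
  obtain hi | hi := lt_or_ge n i
  · have hzero (t : T) : (P t).coeff i = 0 :=
      coeff_eq_zero_of_natDegree_lt ((hdeg t).trans_lt hi)
    simpa [hzero] using hη
  · exact hp i (mem_range_succ_iff.2 hi)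

variable [IsAlgClosed K]

lemma eventually_forall_mem_roots_exists_mem_roots_dist_lt {t₀ : T}
    (hmonic : ∀ t, (P t).Monic) (hdeg : ∀ t, (P t).natDegree = n)
    (hcoeff : ∀ i, ContinuousAt (fun t => (P t).coeff i) t₀) {ε : ℝ} (hε : 0 < ε) :
    ∀ᶠ p in 𝓝 t₀ ×ˢ 𝓝 t₀, ∀ x ∈ (P p.1).roots, ∃ y ∈ (P p.2).roots, dist x y < ε := by
  obtain ⟨B, hB⟩ := exists_eventually_forall_isRoot_norm_le hmonic hdeg hcoeff
  obtain ⟨η, hη, hnear⟩ := exists_pos_forall_exists_mem_roots_dist_lt (K := K) n B hε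
  have hclose := eventually_forall_norm_coeff_sub_lt (fun t => (hdeg t).le) hcoeff hη
  filter_upwards [hB.prod_inl (𝓝 t₀), hclose] with p hbound hclose x hx
  have hroot : (P p.1).IsRoot x := isRoot_of_mem_roots hx
  exact hnear _ _ (hmonic _) (hmonic _) (hdeg _) (hdeg _) (IsAlgClosed.splits _) hclose x hroot
    (hbound x hroot)

variable [LinearOrder T] [∀ t : T, TendstoIxxClass Set.Icc (𝓝 t) (𝓝 t)]

theorem exists_continuous_isRoot (hn : n ≠ 0) (hmonic : ∀ t, (P t).Monic)
    (hdeg : ∀ t, (P t).natDegree = n) (hcoeff : ∀ i, Continuous fun t => (P t).coeff i) :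
    ∃ r : T → K, Continuous r ∧ ∀ t, (P t).IsRoot (r t) := by
  classical
  let R (t : T) : Finset K := (P t).roots.toFinset
  have hne (t : T) : (R t).Nonempty := by
    have hdeg_ne : (P t).degree ≠ 0 := fun h =>
      hn ((hdeg t).symm.trans (natDegree_eq_of_degree_eq_some h))
    obtain ⟨z, hz⟩ := IsAlgClosed.exists_root (P t) hdeg_ne
    exact ⟨z, Multiset.mem_toFinset.2 ((mem_roots (hmonic t).ne_zero).2 hz)⟩
  have hcard (t : T) : #(R t) ≤ n :=
    ((P t).roots.toFinset_card_le.trans (card_roots' _)).trans (hdeg t).le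
  have hR (t : T) (ε : ℝ) (hε : ε > 0) :
      ∀ᶠ p in 𝓝 t ×ˢ 𝓝 t, ∀ x ∈ R p.1, ∃ y ∈ R p.2, dist x y ≤ ε := by
    filter_upwards [eventually_forall_mem_roots_exists_mem_roots_dist_lt hmonic hdeg
      (fun i => (hcoeff i).continuousAt) hε] with p hp x hx
    obtain ⟨y, hy, hxy⟩ := hp x (Multiset.mem_toFinset.1 hx)
    exact ⟨y, Multiset.mem_toFinset.2 hy, hxy.le⟩
  obtain ⟨r, hr, hmem⟩ := exists_continuous_selection hne hcard hR
  exact ⟨r, hr, fun t => isRoot_of_mem_roots (Multiset.mem_toFinset.1 (hmem t))⟩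

theorem exists_continuous_eq_prod_X_sub_C (hmonic : ∀ t, (P t).Monic)
    (hdeg : ∀ t, (P t).natDegree = n) (hcoeff : ∀ i, Continuous fun t => (P t).coeff i) :
    ∃ x : Fin n → T → K, (∀ i, Continuous (x i)) ∧ ∀ t, P t = ∏ i, (X - C (x i t)) := by
  induction n generalizing P with
  | zero =>
    refine ⟨Fin.elim0, fun i => i.elim0, fun t => ?_⟩
    simpa using (hmonic t).natDegree_eq_zero.1 (hdeg t)
  | succ n ih =>
    obtain ⟨r, hr, hroot⟩ := exists_continuous_isRoot n.succ_ne_zero hmonic hdeg hcoeff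
    let Q (t : T) : K[X] := P t /ₘ (X - C (r t))
    have hfactor (t : T) : (X - C (r t)) * Q t = P t :=
      mul_divByMonic_eq_iff_isRoot.2 (hroot t)
    have hmonicQ (t : T) : (Q t).Monic :=
      (monic_X_sub_C (r t)).of_mul_monic_left ((hfactor t).symm ▸ hmonic t)
    have hdegQ (t : T) : (Q t).natDegree = n := by
      rw [natDegree_divByMonic _ (monic_X_sub_C _), hdeg, natDegree_X_sub_C, Nat.add_sub_cancel]
    obtain ⟨y, hy, hprod⟩ :=
      ih hmonicQ hdegQ (continuous_coeff_divByMonic_X_sub_C hdeg hcoeff hr)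
    refine ⟨Fin.cons r y, Fin.cases hr hy, fun t => ?_⟩
    rw [Fin.prod_univ_succ, ← hfactor t, hprod t]
    rfl

theorem exists_continuous_pow_add_sum_eq_prod_sub {a : Fin n → T → K}
    (ha : ∀ i, Continuous (a i)) :
    ∃ x : Fin n → T → K, (∀ i, Continuous (x i)) ∧
      ∀ t z, z ^ n + ∑ i, a i t * z ^ (i : ℕ) = ∏ i, (z - x i t) := by
  let q (t : T) : K[X] := ∑ i, C (a i t) * X ^ (i : ℕ)
  have hq (t : T) : (q t).degree < n := degree_sum_fin_lt fun i => a i t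
  have hcoeff (k : ℕ) : Continuous fun t => (X ^ n + q t).coeff k := by
    simp only [q, coeff_add, finsetSum_coeff, coeff_C_mul]
    fun_prop
  have hdeg (t : T) : (X ^ n + q t).natDegree = n := by
    refine natDegree_eq_of_degree_eq_some ?_
    rw [degree_add_eq_left_of_degree_lt ((hq t).trans_eq (degree_X_pow n).symm), degree_X_pow]
  obtain ⟨x, hx, hprod⟩ :=
    exists_continuous_eq_prod_X_sub_C (fun t => monic_X_pow_add (hq t)) hdeg hcoeff
  refine ⟨x, hx, fun t z => ?_⟩
  simpa [q, eval_finsetSum, eval_prod] using congrArg (eval z) (hprod t)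

end Roots

lemma tendstoIxxClass_Icc_nhds_subtype {T : Type*} [Preorder T] [TopologicalSpace T] {S : Set T}
    (t : S) [TendstoIxxClass Set.Icc (𝓝 (t : T)) (𝓝 (t : T))] :
    TendstoIxxClass Set.Icc (𝓝 t) (𝓝 t) := by
  refine ⟨tendsto_smallSets_iff.2 fun V hV => ?_⟩
  obtain ⟨W, hW, hWV⟩ := mem_nhds_subtype S t V |>.1 hV
  have hval : Tendsto ((↑) : S → T) (𝓝 t) (𝓝 t) := continuousAt_subtype_val
  have hIcc : ∀ᶠ p : S × S in 𝓝 t ×ˢ 𝓝 t, Set.Icc (p.1 : T) p.2 ⊆ W :=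
    ((hval.comp tendsto_fst).Icc (hval.comp tendsto_snd)).eventually
      (eventually_smallSets_subset.2 hW)
  filter_upwards [hIcc] with p hp
  exact (preimage_mono hp).trans hWV

theorem exists_continuous_full_tuple_of_roots_on_interval_general {K T : Type*} [NormedField K]
    [IsAlgClosed K] [LinearOrder T] [TopologicalSpace T] [OrderTopology T] (n : ℕ) (S : Set T)
    (a : Fin n → T → K) (ha : ∀ i, ContinuousOn (a i) S) :
    ∃ x : Fin n → T → K, (∀ i, ContinuousOn (x i) S) ∧
      ∀ t ∈ S, ∀ z, z ^ n + ∑ i, a i t * z ^ (i : ℕ) = ∏ i, (z - x i t) := by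
  have (t : S) : TendstoIxxClass Set.Icc (𝓝 t) (𝓝 t) := tendstoIxxClass_Icc_nhds_subtype t
  obtain ⟨x, hx, hprod⟩ := exists_continuous_pow_add_sum_eq_prod_sub
    (a := fun i (t : S) => a i t) fun i => (ha i).domRestrict
  let y (i : Fin n) : T → K := Function.extend Subtype.val (x i) 0
  have hy (i : Fin n) (t : S) : y i t = x i t := Subtype.val_injective.extend_apply (x i) 0 t
  refine ⟨y, fun i => ?_, fun t ht z => ?_⟩
  · rw [continuousOn_iff_continuous_domRestrict]
    exact (hx i).congr fun t => (hy i t).symm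
  · simpa only [← hy] using hprod ⟨t, ht⟩ z

/-- If the coefficients of a monic degree-`n` polynomial (`n ≥ 1`) depend continuously on a
parameter `t` ranging over a compact interval `[α, β]`, then there is a full tuple of roots
depending continuously on `t` over `[α, β]`. -/
theorem exists_continuous_full_tuple_of_roots_on_interval (n : ℕ) (hn : 1 ≤ n)
    (α β : ℝ) (hαβ : α < β) (a : Fin n → ℝ → ℂ)
    (ha : ∀ i : Fin n, ContinuousOn (a i) (Set.Icc α β)) :
    ∃ x : Fin n → ℝ → ℂ,
      (∀ i : Fin n, ContinuousOn (x i) (Set.Icc α β)) ∧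
      ∀ t ∈ Set.Icc α β, ∀ z : ℂ,
        z ^ n + ∑ i : Fin n, a i t * z ^ (i : ℕ) = ∏ i : Fin n, (z - x i t) := by
  exact exists_continuous_full_tuple_of_roots_on_interval_general n (Set.Icc α β) a ha
end

section
/- Let n ≥ 1 be a natural number and D_a, D_w be compact subsets of ℂⁿ. For M = (a₀, …, a_{n−1}) ∈ ℂⁿ, let Λ̄(M) denote the maximum of the real parts of the roots of the characteristic polynomial λⁿ − a_{n−1}λ^{n−1} − … − a₁λ − a₀. Then there exists a constant C ≥ 0 such that for every M = (a₀, …, a_{n−1}) ∈ D_a, every N = (w⁰, …, w^{n−1}) ∈ D_w, every n-times differentiable function w : ℝ → ℂ satisfying w⁽ⁿ⁾(ξ) = a_{n−1}·w⁽ⁿ⁻¹⁾(ξ) + … + a₁·w′(ξ) + a₀·w(ξ) for all ξ ≥ 0 and w⁽ⁱ⁾(0) = wⁱ for i = 0, …, n−1, every index i ∈ {0, …, n−1}, and every ξ ≥ 0, one has |w⁽ⁱ⁾(ξ)| ≤ C·(1 + ξ^{n−1})·e^{Λ̄(M)·ξ}. -/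
/-- `maxCharRootRe n a` is the maximum `Λ̄(M)` of the real parts of the roots of the
characteristic polynomial `λⁿ − a_{n−1}λ^{n−1} − … − a₁λ − a₀` (realized as the supremum of
the nonempty finite set of real parts of the roots). -/
noncomputable def maxCharRootRe (n : ℕ) (a : Fin n → ℂ) : ℝ :=
  sSup {x : ℝ | ∃ l : ℂ, l ^ n - ∑ i : Fin n, a i * l ^ (i : ℕ) = 0 ∧ x = l.re}

/-!
Factor the characteristic polynomial as `∏_{j<n} (X - l j)`, write `D` for `d/dξ`, and put
`u k = ∏_{j<k} (D - l j) w`. Then `u k' = l k • u k + u (k + 1)` and `u n = 0`, so integrating this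
triangular system from the bottom up gains one power of `1 + ξ` per equation on top of
`exp (Λ̄ ξ)`. The polynomials `∏_{j<k} (X - l j)` and the monomials `X ^ k` are expressed through
each other with coefficients controlled by a bound on the roots, which transfers the initial data
from `w⁽ⁱ⁾` to `u k` and the final estimate back. By Cauchy's bound on the roots, the constants are
uniform in the coefficients.
-/

open Polynomial Finset Lagrange

section CharPoly

variable {K : Type*} {n : ℕ}

/-- The characteristic polynomial `Xⁿ - a_{n-1} X^{n-1} - … - a₀` of the differential equation
`w⁽ⁿ⁾ = a_{n-1} w⁽ⁿ⁻¹⁾ + … + a₀ w`, which is also that of the linear recurrence with the same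
coefficients. -/
noncomputable def odeCharPoly [CommRing K] (a : Fin n → K) : K[X] :=
  (LinearRecurrence.mk n a).charPoly

theorem isRoot_odeCharPoly_iff [CommRing K] {a : Fin n → K} {l : K} :
    (odeCharPoly a).IsRoot l ↔ l ^ n - ∑ i : Fin n, a i * l ^ (i : ℕ) = 0 := by
  simp [odeCharPoly, LinearRecurrence.charPoly, eval_finsetSum]

theorem monic_odeCharPoly [CommRing K] (a : Fin n → K) : (odeCharPoly a).Monic :=
  LinearRecurrence.charPoly_monic _

theorem natDegree_odeCharPoly [CommRing K] [Nontrivial K] (a : Fin n → K) :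
    (odeCharPoly a).natDegree = n :=
  natDegree_eq_of_degree_eq_some (LinearRecurrence.charPoly_degree_eq_order _)

theorem coeff_odeCharPoly [CommRing K] (a : Fin n → K) (i : Fin n) :
    (odeCharPoly a).coeff i = -a i := by
  simp [odeCharPoly, LinearRecurrence.charPoly, coeff_monomial, i.isLt.ne', Fin.val_inj]

theorem norm_le_of_isRoot_odeCharPoly [NormedField K] {a : Fin n → K} {l : K}
    (hl : (odeCharPoly a).IsRoot l) : ‖l‖ ≤ ‖a‖ + 1 := by
  have hcauchy : cauchyBound (odeCharPoly a) ≤ ‖a‖₊ + 1 := by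
    rw [cauchyBound, (monic_odeCharPoly a).leadingCoeff, nnnorm_one, div_one, natDegree_odeCharPoly]
    gcongr
    refine Finset.sup_le fun i hi => ?_
    rw [coeff_odeCharPoly a ⟨i, mem_range.1 hi⟩, nnnorm_neg]
    exact nnnorm_le_pi_nnnorm a _
  exact (hl.norm_lt_cauchyBound (monic_odeCharPoly a).ne_zero).le.trans hcauchy

theorem re_le_maxCharRootRe {a : Fin n → ℂ} {l : ℂ} (hl : (odeCharPoly a).IsRoot l) :
    l.re ≤ maxCharRootRe n a := by
  refine le_csSup ⟨‖a‖ + 1, ?_⟩ ⟨l, isRoot_odeCharPoly_iff.1 hl, rfl⟩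
  rintro _ ⟨z, hz, rfl⟩
  exact (Complex.re_le_norm z).trans (norm_le_of_isRoot_odeCharPoly (isRoot_odeCharPoly_iff.2 hz))

end CharPoly

section Newton

variable {K : Type*}

theorem exists_nodal_range_eq [Field K] {p : K[X]} (hmonic : p.Monic) (hsplits : p.Splits) :
    ∃ l : ℕ → K, nodal (range p.natDegree) l = p := by
  refine ⟨fun k => p.roots.toList.getD k 0, ?_⟩
  have hlength : p.natDegree = p.roots.toList.length := by
    rw [Multiset.length_toList, hsplits.natDegree_eq_card_roots]
  calc nodal (range p.natDegree) (fun k => p.roots.toList.getD k 0)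
      = ∏ i : Fin p.roots.toList.length, (X - C p.roots.toList[(i : ℕ)]) := by
        rw [nodal_eq, hlength, Finset.prod_range]
        exact prod_congr rfl fun i _ => by rw [List.getD_eq_getElem _ _ i.isLt]
    _ = (p.roots.map (X - C ·)).prod := by
        rw [Fin.prod_univ_fun_getElem _ (X - C ·), ← Multiset.prod_coe, ← Multiset.map_coe,
          Multiset.coe_toList]
    _ = p := (hsplits.eq_prod_roots_of_monic hmonic).symm

theorem X_mul_nodal_range [CommRing K] (l : ℕ → K) (k : ℕ) :
    X * nodal (range k) l = l k • nodal (range k) l + nodal (range (k + 1)) l := by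
  rw [nodal_eq, nodal_eq, prod_range_succ, smul_eq_C_mul]
  ring

theorem X_pow_succ_mul_nodal_range [CommRing K] (l : ℕ → K) (m k : ℕ) :
    X ^ (m + 1) * nodal (range k) l =
      l k • (X ^ m * nodal (range k) l) + X ^ m * nodal (range (k + 1)) l := by
  rw [pow_succ, mul_assoc, X_mul_nodal_range, mul_add, mul_smul_comm]

variable {E : Type*} [NormedField K] [SeminormedAddCommGroup E] [NormedSpace K E]
  (L : K[X] →ₗ[K] E) {l : ℕ → K} {R B : ℝ} {n : ℕ}

theorem norm_map_X_pow_mul_nodal_le_of_norm_map_X_pow_le (hl : ∀ k < n, ‖l k‖ ≤ R)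
    (hL : ∀ m < n, ‖L (X ^ m)‖ ≤ B) (k : ℕ) :
    ∀ m, m + k < n → ‖L (X ^ m * nodal (range k) l)‖ ≤ (1 + R) ^ k * B := by
  induction k with
  | zero => simpa using hL
  | succ k ih =>
    intro m hm
    have hR : 0 ≤ R := (norm_nonneg _).trans (hl k (by lia))
    have hsplit : L (X ^ m * nodal (range (k + 1)) l) =
        L (X ^ (m + 1) * nodal (range k) l) - l k • L (X ^ m * nodal (range k) l) := by
      rw [X_pow_succ_mul_nodal_range, map_add, map_smul, add_sub_cancel_left]
    calc ‖L (X ^ m * nodal (range (k + 1)) l)‖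
        ≤ ‖L (X ^ (m + 1) * nodal (range k) l)‖ + ‖l k‖ * ‖L (X ^ m * nodal (range k) l)‖ := by
          rw [hsplit, ← norm_smul]
          exact norm_sub_le _ _
      _ ≤ (1 + R) ^ k * B + R * ((1 + R) ^ k * B) := by
          gcongr
          exacts [ih (m + 1) (by lia), hl k (by lia), ih m (by lia)]
      _ = (1 + R) ^ (k + 1) * B := by ring

theorem norm_map_X_pow_mul_nodal_le_of_norm_map_nodal_le (hl : ∀ k < n, ‖l k‖ ≤ R)
    (hL : ∀ k < n, ‖L (nodal (range k) l)‖ ≤ B) (m : ℕ) :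
    ∀ k, m + k < n → ‖L (X ^ m * nodal (range k) l)‖ ≤ (1 + R) ^ m * B := by
  induction m with
  | zero => simpa using hL
  | succ m ih =>
    intro k hk
    have hR : 0 ≤ R := (norm_nonneg _).trans (hl k (by lia))
    calc ‖L (X ^ (m + 1) * nodal (range k) l)‖
        ≤ ‖l k‖ * ‖L (X ^ m * nodal (range k) l)‖ + ‖L (X ^ m * nodal (range (k + 1)) l)‖ := by
          rw [X_pow_succ_mul_nodal_range, map_add, map_smul, ← norm_smul]
          exact norm_add_le _ _
      _ ≤ R * ((1 + R) ^ m * B) + (1 + R) ^ m * B := by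
          gcongr
          exacts [hl k (by lia), ih k (by lia), ih (k + 1) (by lia)]
      _ = (1 + R) ^ (m + 1) * B := by ring

theorem norm_map_nodal_le_of_norm_map_X_pow_le (hl : ∀ k < n, ‖l k‖ ≤ R)
    (hL : ∀ m < n, ‖L (X ^ m)‖ ≤ B) {k : ℕ} (hk : k < n) :
    ‖L (nodal (range k) l)‖ ≤ (1 + R) ^ k * B := by
  simpa using norm_map_X_pow_mul_nodal_le_of_norm_map_X_pow_le L hl hL k 0 (by lia)

theorem norm_map_X_pow_le_of_norm_map_nodal_le (hl : ∀ k < n, ‖l k‖ ≤ R)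
    (hL : ∀ k < n, ‖L (nodal (range k) l)‖ ≤ B) {m : ℕ} (hm : m < n) :
    ‖L (X ^ m)‖ ≤ (1 + R) ^ m * B := by
  simpa using norm_map_X_pow_mul_nodal_le_of_norm_map_nodal_le L hl hL m 0 hm

end Newton

variable {E : Type*} [NormedAddCommGroup E] [NormedSpace ℂ E]

theorem norm_cexp_neg_mul_ofReal (l : ℂ) (x : ℝ) :
    ‖Complex.exp (-l * x)‖ = Real.exp (-l.re * x) := by
  simp [Complex.norm_exp]

theorem hasDerivAt_cexp_neg_mul_smul {u : ℝ → E} {v : E} {l : ℂ} {x : ℝ}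
    (hu : HasDerivAt u (l • u x + v) x) :
    HasDerivAt (fun y : ℝ => Complex.exp (-l * y) • u y) (Complex.exp (-l * x) • v) x := by
  have hlin : HasDerivAt (fun y : ℝ => -l * (y : ℂ)) (-l) x := by
    simpa using (Complex.ofRealCLM.hasDerivAt (x := x)).const_mul (-l)
  refine (hlin.cexp.fun_smul hu).congr_deriv ?_
  module

theorem norm_le_mul_exp_of_hasDerivAt_smul_add {u v : ℝ → E} {B B' : ℝ → ℝ} {l : ℂ} {Λ : ℝ}
    (hl : l.re ≤ Λ) (hu : ∀ x, 0 ≤ x → HasDerivAt u (l • u x + v x) x)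
    (hB : ∀ x, HasDerivAt B (B' x) x) (hB_nonneg : ∀ x, 0 ≤ x → 0 ≤ B x) (h0 : ‖u 0‖ ≤ B 0)
    (hv : ∀ x, 0 ≤ x → ‖v x‖ ≤ B' x * Real.exp (Λ * x)) {x : ℝ} (hx : 0 ≤ x) :
    ‖u x‖ ≤ B x * Real.exp (Λ * x) := by
  have hexp : ∀ y, Real.exp (Λ * y) = Real.exp ((Λ - l.re) * y) * Real.exp (l.re * y) :=
    fun y => by rw [← Real.exp_add]; ring_nf
  have hexp_neg : ∀ y, Real.exp (l.re * y) * Real.exp (-l.re * y) = 1 :=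
    fun y => by rw [← Real.exp_add]; simp
  have hmajorant : ∀ y, HasDerivAt (fun y => B y * Real.exp ((Λ - l.re) * y))
      (B' y * Real.exp ((Λ - l.re) * y) + B y * (Real.exp ((Λ - l.re) * y) * (Λ - l.re))) y :=
    fun y => (hB y).fun_mul (by simpa using ((hasDerivAt_id y).const_mul (Λ - l.re)).exp)
  have hconj : ‖Complex.exp (-l * x) • u x‖ ≤ B x * Real.exp ((Λ - l.re) * x) := by
    refine image_norm_le_of_norm_deriv_right_le_deriv_boundary
      (f := fun y : ℝ => Complex.exp (-l * y) • u y) (a := 0)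
      (fun y hy => (hasDerivAt_cexp_neg_mul_smul (hu y hy.1)).continuousAt.continuousWithinAt)
      (fun y hy => (hasDerivAt_cexp_neg_mul_smul (hu y hy.1)).hasDerivWithinAt)
      (by simpa using h0) hmajorant (fun y hy => ?_) ⟨hx, le_rfl⟩
    have hgap : 0 ≤ B y * (Real.exp ((Λ - l.re) * y) * (Λ - l.re)) :=
      mul_nonneg (hB_nonneg y hy.1) (mul_nonneg (Real.exp_nonneg _) (sub_nonneg.2 hl))
    calc ‖Complex.exp (-l * y) • v y‖
        = Real.exp (-l.re * y) * ‖v y‖ := by rw [norm_smul, norm_cexp_neg_mul_ofReal]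
      _ ≤ Real.exp (-l.re * y) * (B' y * Real.exp (Λ * y)) := by gcongr; exact hv y hy.1
      _ = B' y * Real.exp ((Λ - l.re) * y) := by
          rw [hexp]; linear_combination B' y * Real.exp ((Λ - l.re) * y) * hexp_neg y
      _ ≤ _ := le_add_of_nonneg_right hgap
  rw [norm_smul, norm_cexp_neg_mul_ofReal] at hconj
  calc ‖u x‖ = Real.exp (l.re * x) * (Real.exp (-l.re * x) * ‖u x‖) := by
        rw [← mul_assoc, hexp_neg, one_mul]
    _ ≤ Real.exp (l.re * x) * (B x * Real.exp ((Λ - l.re) * x)) := by gcongr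
    _ = B x * Real.exp (Λ * x) := by rw [hexp]; ring

theorem norm_le_pow_mul_exp_of_triangular_system {u : ℕ → ℝ → E} {l : ℕ → ℂ} {Λ K : ℝ} {n : ℕ}
    (hl : ∀ k < n, (l k).re ≤ Λ)
    (hu : ∀ k < n, ∀ x, 0 ≤ x → HasDerivAt (u k) (l k • u k x + u (k + 1) x) x)
    (hlast : ∀ x, 0 ≤ x → u n x = 0) (h0 : ∀ k < n, ‖u k 0‖ ≤ K) (j : ℕ) :
    ∀ k, k + j + 1 = n → ∀ x, 0 ≤ x → ‖u k x‖ ≤ K * (1 + x) ^ j * Real.exp (Λ * x) := by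
  induction j with
  | zero =>
    rintro k rfl x hx
    have hK : 0 ≤ K := (norm_nonneg _).trans (h0 k (by lia))
    refine norm_le_mul_exp_of_hasDerivAt_smul_add (hl k (by lia)) (hu k (by lia))
      (B := fun x => K * (1 + x) ^ 0) (B' := 0) (by simpa using fun x => hasDerivAt_const x K)
      (by simpa using fun _ _ => hK) (by simpa using h0 k (by lia)) (fun y hy => ?_) hx
    simp [hlast y hy]
  | succ j ih =>
    intro k hk x hx
    have hK : 0 ≤ K := (norm_nonneg _).trans (h0 k (by lia))
    have hderiv : ∀ y : ℝ, HasDerivAt (fun y : ℝ => K * (1 + y) ^ (j + 1))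
        (K * (((j + 1 : ℕ) : ℝ) * (1 + y) ^ j)) y := fun y => by
      simpa using (((hasDerivAt_id y).const_add 1).pow (j + 1)).const_mul K
    refine norm_le_mul_exp_of_hasDerivAt_smul_add (hl k (by lia)) (hu k (by lia)) hderiv
      (fun y hy => by positivity) (by simpa using h0 k (by lia)) (fun y hy => ?_) hx
    refine (ih (k + 1) (by lia) y hy).trans ?_
    gcongr
    exact le_mul_of_one_le_left (by positivity) (by simp)

/-- The value at `x` of `p(d/dx) w`, as a linear function of the symbol `p`. Derivatives that do not
exist contribute the junk values of `iteratedDeriv`. -/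
noncomputable def diffOp (w : ℝ → E) (x : ℝ) : ℂ[X] →ₗ[ℂ] E :=
  lsum fun i => LinearMap.toSpanSingleton ℂ E (iteratedDeriv i w x)

theorem diffOp_apply (w : ℝ → E) (x : ℝ) (p : ℂ[X]) :
    diffOp w x p = ∑ i ∈ p.support, p.coeff i • iteratedDeriv i w x :=
  rfl

theorem diffOp_monomial (w : ℝ → E) (x : ℝ) (i : ℕ) (c : ℂ) :
    diffOp w x (monomial i c) = c • iteratedDeriv i w x :=
  sum_monomial_index c _ (zero_smul ℂ _)

theorem diffOp_X_pow (w : ℝ → E) (x : ℝ) (i : ℕ) : diffOp w x (X ^ i) = iteratedDeriv i w x := by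
  rw [X_pow_eq_monomial, diffOp_monomial, one_smul]

theorem diffOp_odeCharPoly {n : ℕ} (w : ℝ → E) (x : ℝ) (a : Fin n → ℂ) :
    diffOp w x (odeCharPoly a) =
      iteratedDeriv n w x - ∑ i : Fin n, a i • iteratedDeriv (i : ℕ) w x := by
  simp only [odeCharPoly, LinearRecurrence.charPoly, map_sub, map_sum, diffOp_monomial, one_smul]

theorem hasDerivAt_diffOp {w : ℝ → E} {x : ℝ} {p : ℂ[X]}
    (hw : ∀ i ∈ p.support, DifferentiableAt ℝ (iteratedDeriv i w) x) :
    HasDerivAt (fun y => diffOp w y p) (diffOp w x (X * p)) x := by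
  have hXp : diffOp w x (X * p) = ∑ i ∈ p.support, p.coeff i • iteratedDeriv (i + 1) w x := by
    conv_lhs => rw [p.as_sum_support, mul_sum, map_sum]
    simp only [X_mul_monomial, diffOp_monomial]
  simp only [hXp, diffOp_apply]
  refine HasDerivAt.fun_sum fun i hi => HasDerivAt.const_smul _ ?_
  rw [iteratedDeriv_succ]
  exact (hw i hi).hasDerivAt

theorem hasDerivAt_diffOp_nodal_range {w : ℝ → E} {x : ℝ} {l : ℕ → ℂ} {k : ℕ}
    (hw : ∀ i ≤ k, DifferentiableAt ℝ (iteratedDeriv i w) x) :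
    HasDerivAt (fun y => diffOp w y (nodal (range k) l))
      (l k • diffOp w x (nodal (range k) l) + diffOp w x (nodal (range (k + 1)) l)) x := by
  rw [← map_smul, ← map_add, ← X_mul_nodal_range]
  refine hasDerivAt_diffOp fun i hi => hw i ?_
  simpa using le_natDegree_of_mem_supp i hi

section Estimate

variable {n : ℕ} {a : Fin n → ℂ} {w : ℝ → E}

theorem norm_diffOp_nodal_range_le {l : ℕ → ℂ} {Λ K : ℝ}
    (hw : ∀ i < n, ∀ ξ, 0 ≤ ξ → DifferentiableAt ℝ (iteratedDeriv i w) ξ)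
    (hode : ∀ ξ, 0 ≤ ξ → diffOp w ξ (nodal (range n) l) = 0)
    (hl : ∀ k < n, (l k).re ≤ Λ) (h0 : ∀ k < n, ‖diffOp w 0 (nodal (range k) l)‖ ≤ K)
    {k : ℕ} (hk : k < n) {ξ : ℝ} (hξ : 0 ≤ ξ) :
    ‖diffOp w ξ (nodal (range k) l)‖ ≤ K * (1 + ξ) ^ (n - 1) * Real.exp (Λ * ξ) := by
  have hK : 0 ≤ K := (norm_nonneg _).trans (h0 k hk)
  have htriangular := norm_le_pow_mul_exp_of_triangular_system
    (u := fun k ξ => diffOp w ξ (nodal (range k) l)) hl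
    (fun k hk ξ hξ => hasDerivAt_diffOp_nodal_range fun i hi => hw i (hi.trans_lt hk) ξ hξ)
    hode h0 (n - 1 - k) k (by lia) ξ hξ
  refine htriangular.trans ?_
  have hpow : (1 + ξ) ^ (n - 1 - k) ≤ (1 + ξ) ^ (n - 1) :=
    pow_le_pow_right₀ (le_add_of_nonneg_right hξ) (Nat.sub_le _ _)
  gcongr

theorem norm_iteratedDeriv_le_of_linear_ode {A W : ℝ} (ha : ‖a‖ ≤ A)
    (hw : ∀ i < n, ∀ ξ, 0 ≤ ξ → DifferentiableAt ℝ (iteratedDeriv i w) ξ)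
    (hode : ∀ ξ, 0 ≤ ξ → iteratedDeriv n w ξ = ∑ i : Fin n, a i • iteratedDeriv (i : ℕ) w ξ)
    (h0 : ∀ i < n, ‖iteratedDeriv i w 0‖ ≤ W) {i : ℕ} (hi : i < n) {ξ : ℝ} (hξ : 0 ≤ ξ) :
    ‖iteratedDeriv i w ξ‖ ≤
      (A + 2) ^ (2 * n) * W * (1 + ξ) ^ (n - 1) * Real.exp (maxCharRootRe n a * ξ) := by
  obtain ⟨l, hfactor⟩ := exists_nodal_range_eq
    (monic_odeCharPoly a) (IsAlgClosed.splits (odeCharPoly a))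
  rw [natDegree_odeCharPoly] at hfactor
  have hroot : ∀ k < n, (odeCharPoly a).IsRoot (l k) := fun k hk => by
    rw [← hfactor]
    exact eval_nodal_at_node (mem_range.2 hk)
  have hnorm : ∀ k < n, ‖l k‖ ≤ A + 1 := fun k hk =>
    (norm_le_of_isRoot_odeCharPoly (hroot k hk)).trans (by gcongr)
  have hA : 1 ≤ 1 + (A + 1) := by linarith [norm_nonneg a]
  have hW : 0 ≤ W := (norm_nonneg _).trans (h0 i hi)
  have hinit : ∀ k < n, ‖diffOp w 0 (nodal (range k) l)‖ ≤ (1 + (A + 1)) ^ n * W := fun k hk =>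
    (norm_map_nodal_le_of_norm_map_X_pow_le _ hnorm (by simpa only [diffOp_X_pow]) hk).trans
      (by gcongr)
  have hnewton : ∀ k < n, ‖diffOp w ξ (nodal (range k) l)‖ ≤ (1 + (A + 1)) ^ n * W *
      (1 + ξ) ^ (n - 1) * Real.exp (maxCharRootRe n a * ξ) := fun k hk =>
    norm_diffOp_nodal_range_le hw
      (fun ξ hξ => by rw [hfactor, diffOp_odeCharPoly, hode ξ hξ, sub_self])
      (fun k hk => re_le_maxCharRootRe (hroot k hk)) hinit hk hξ
  calc ‖iteratedDeriv i w ξ‖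
      = ‖diffOp w ξ (X ^ i)‖ := by rw [diffOp_X_pow]
    _ ≤ (1 + (A + 1)) ^ i * _ := norm_map_X_pow_le_of_norm_map_nodal_le _ hnorm hnewton hi
    _ ≤ (1 + (A + 1)) ^ n * _ := by gcongr
    _ = _ := by ring

end Estimate

theorem uniform_estimate_linear_ode_general (n : ℕ) {Da : Set (Fin n → ℂ)} {Dw : Set (Fin n → E)}
    (hDa : Bornology.IsBounded Da) (hDw : Bornology.IsBounded Dw) :
    ∃ C : ℝ, 0 ≤ C ∧
      ∀ M ∈ Da, ∀ N ∈ Dw, ∀ w : ℝ → E,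
        (∀ i < n, ∀ ξ : ℝ, 0 ≤ ξ → DifferentiableAt ℝ (iteratedDeriv i w) ξ) →
        (∀ ξ : ℝ, 0 ≤ ξ →
          iteratedDeriv n w ξ = ∑ i : Fin n, M i • iteratedDeriv (i : ℕ) w ξ) →
        (∀ i : Fin n, iteratedDeriv (i : ℕ) w 0 = N i) →
        ∀ i < n, ∀ ξ : ℝ, 0 ≤ ξ →
          ‖iteratedDeriv i w ξ‖ ≤
            C * (1 + ξ ^ (n - 1)) * Real.exp (maxCharRootRe n M * ξ) := by
  obtain ⟨A, hA_pos, hA⟩ := hDa.exists_pos_norm_le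
  obtain ⟨W, hW_pos, hW⟩ := hDw.exists_pos_norm_le
  refine ⟨(A + 2) ^ (2 * n) * W * 2 ^ (n - 1 - 1), by positivity, ?_⟩
  intro M hM N hN w hw hode hinit i hi ξ hξ
  have h0 : ∀ i < n, ‖iteratedDeriv i w 0‖ ≤ W := fun i hi =>
    (hinit ⟨i, hi⟩).symm ▸ (norm_le_pi_norm N _).trans (hW N hN)
  have hpow : (1 + ξ) ^ (n - 1) ≤ 2 ^ (n - 1 - 1) * (1 + ξ ^ (n - 1)) := by
    simpa using add_pow_le zero_le_one hξ (n - 1)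
  calc ‖iteratedDeriv i w ξ‖
      ≤ (A + 2) ^ (2 * n) * W * (1 + ξ) ^ (n - 1) * Real.exp (maxCharRootRe n M * ξ) :=
        norm_iteratedDeriv_le_of_linear_ode (hA M hM) hw hode h0 hi hξ
    _ ≤ (A + 2) ^ (2 * n) * W * (2 ^ (n - 1 - 1) * (1 + ξ ^ (n - 1))) *
          Real.exp (maxCharRootRe n M * ξ) := by gcongr
    _ = _ := by ring

/-- Uniform exponential–power estimate for solutions of the linear ODE
`w⁽ⁿ⁾ = a_{n−1}w⁽ⁿ⁻¹⁾ + … + a₀w` with coefficients in a compact set `D_a` and initial data in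
a compact set `D_w`: there is `C ≥ 0` with
`|w⁽ⁱ⁾(ξ)| ≤ C·(1 + ξ^{n−1})·exp(Λ̄(M)·ξ)` for all `i < n` and all `ξ ≥ 0`. -/
theorem uniform_estimate_linear_ode (n : ℕ) (hn : 1 ≤ n)
    (Da Dw : Set (Fin n → ℂ)) (hDa : IsCompact Da) (hDw : IsCompact Dw) :
    ∃ C : ℝ, 0 ≤ C ∧
      ∀ M ∈ Da, ∀ N ∈ Dw, ∀ w : ℝ → ℂ,
        (∀ i < n, Differentiable ℝ (iteratedDeriv i w)) →
        (∀ ξ : ℝ, 0 ≤ ξ →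
          iteratedDeriv n w ξ = ∑ i : Fin n, M i * iteratedDeriv (i : ℕ) w ξ) →
        (∀ i : Fin n, iteratedDeriv (i : ℕ) w 0 = N i) →
        ∀ i < n, ∀ ξ : ℝ, 0 ≤ ξ →
          ‖iteratedDeriv i w ξ‖ ≤
            C * (1 + ξ ^ (n - 1)) * Real.exp (maxCharRootRe n M * ξ) := by
  obtain ⟨C, hC, hbound⟩ := uniform_estimate_linear_ode_general n hDa.isBounded hDw.isBounded
  exact ⟨C, hC, fun M hM N hN w hw => hbound M hM N hN w fun i hi ξ _ => hw i hi ξ⟩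
end

section
/- For every natural number n ≥ 1, the function Λ̄ : ℂⁿ → ℝ that maps (a₀, …, a_{n−1}) to the maximum of the real parts of the (complex) roots of the polynomial zⁿ + a_{n−1}z^{n−1} + … + a₁z + a₀ is continuous on ℂⁿ. -/
/-- `maxRootRe n a` is the maximum of the real parts of the complex roots of the monic
polynomial `zⁿ + a_{n−1}z^{n−1} + … + a₁z + a₀` (realized as the supremum of the nonempty
finite set of real parts of the roots). -/
noncomputable def maxRootRe (n : ℕ) (a : Fin n → ℂ) : ℝ :=
  sSup {x : ℝ | ∃ l : ℂ, l ^ n + ∑ i : Fin n, a i * l ^ (i : ℕ) = 0 ∧ x = l.re}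

/-!
Mathlib's continuity of roots bounds the distance from a root `z` of one monic polynomial to the
roots of another by a quantity that is small when the coefficients are close, uniformly for `z` in
a bounded set. By Cauchy's bound the roots stay bounded as long as the coefficients do, so
the estimate applies in both directions: every root of `p` is close to a root of any nearby `q`,
and vice versa. Hence the root set is a lower and upper hemicontinuous function of the
coefficients, and by Berge's maximum theorem the maximum over it of a continuous function is
continuous.
-/

open Polynomial Set Topology

section MaximumTheorem

variable {α β γ : Type*} [TopologicalSpace α] [TopologicalSpace β]
  [ConditionallyCompleteLinearOrder γ] {F : α → Set β} {φ : β → γ}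

lemma lowerSemicontinuous_sSup_image (hF : LowerHemicontinuous F) (hne : ∀ a, (F a).Nonempty)
    (hbdd : ∀ a, BddAbove (φ '' F a)) (hφ : LowerSemicontinuous φ) :
    LowerSemicontinuous fun a ↦ sSup (φ '' F a) := by
  intro a y hy
  obtain ⟨_, ⟨z, hz, rfl⟩, hyz⟩ := exists_lt_of_lt_csSup ((hne a).image φ) hy
  have hmeets := lowerHemicontinuousAt_iff.1 (hF a) _ (hφ.isOpen_preimage y) ⟨z, hz, hyz⟩
  filter_upwards [hmeets] with b ⟨w, hw, hyw⟩
  exact lt_csSup_of_lt (hbdd b) (mem_image_of_mem φ hw) hyw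

lemma upperSemicontinuous_sSup_image (hF : UpperHemicontinuous F) (hne : ∀ a, (F a).Nonempty)
    (hcomp : ∀ a, IsCompact (F a)) (hφ : UpperSemicontinuous φ) :
    UpperSemicontinuous fun a ↦ sSup (φ '' F a) := by
  have isGreatest_sSup (a : α) : IsGreatest (φ '' F a) (sSup (φ '' F a)) := by
    obtain ⟨z, hz, hmax⟩ := (hφ.upperSemicontinuousOn _).exists_isMaxOn (hne a) (hcomp a)
    have hgreatest : IsGreatest (φ '' F a) (φ z) :=
      ⟨mem_image_of_mem φ hz, forall_mem_image.2 hmax⟩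
    rwa [hgreatest.csSup_eq]
  intro a y hy
  have hsub : F a ⊆ φ ⁻¹' Iio y := fun z hz ↦
    ((isGreatest_sSup a).2 (mem_image_of_mem φ hz)).trans_lt hy
  filter_upwards [hF.forall_isOpen a _ (hφ.isOpen_preimage y) hsub] with b hb
  obtain ⟨w, hw, hsup⟩ := (isGreatest_sSup b).1
  exact hsup ▸ hb hw

theorem continuous_sSup_image_of_hemicontinuous [TopologicalSpace γ] [OrderTopology γ]
    (hlower : LowerHemicontinuous F) (hupper : UpperHemicontinuous F)
    (hne : ∀ a, (F a).Nonempty) (hcomp : ∀ a, IsCompact (F a)) (hφ : Continuous φ) :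
    Continuous fun a ↦ sSup (φ '' F a) :=
  continuous_iff_lower_upperSemicontinuous.2
    ⟨lowerSemicontinuous_sSup_image hlower hne
      (fun a ↦ (hcomp a).bddAbove_image hφ.continuousOn) hφ.lowerSemicontinuous,
    upperSemicontinuous_sSup_image hupper hne hcomp hφ.upperSemicontinuous⟩

end MaximumTheorem

/-- The monic polynomial `Xⁿ + a_{n−1}X^{n−1} + … + a₁X + a₀`, whose roots `maxRootRe` ranges over.
The vector `a` lists the non-leading coefficients only, in order of increasing degree. -/
noncomputable def monicOfCoeffs {R : Type*} [Semiring R] {n : ℕ} (a : Fin n → R) : R[X] :=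
  X ^ n + ∑ i : Fin n, C (a i) * X ^ (i : ℕ)

section MonicOfCoeffs

variable {R : Type*} [Semiring R] {n : ℕ} (a : Fin n → R)

lemma monic_monicOfCoeffs : (monicOfCoeffs a).Monic :=
  monic_X_pow_add (degree_sum_fin_lt a)

lemma natDegree_monicOfCoeffs [Nontrivial R] : (monicOfCoeffs a).natDegree = n := by
  rw [monicOfCoeffs,
    natDegree_add_eq_left_of_degree_lt (by simpa only [degree_X_pow] using degree_sum_fin_lt a),
    natDegree_X_pow]

lemma coeff_monicOfCoeffs_of_lt {i : ℕ} (hi : i < n) : (monicOfCoeffs a).coeff i = a ⟨i, hi⟩ := by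
  have hcoeff (j : Fin n) : (if i = j then a j else 0) = if ⟨i, hi⟩ = j then a j else 0 := by
    simp only [Fin.ext_iff]
  simp [monicOfCoeffs, coeff_X_pow, hi.ne, hcoeff]

lemma coeff_monicOfCoeffs_of_ge {i : ℕ} (hi : n ≤ i) :
    (monicOfCoeffs a).coeff i = if i = n then 1 else 0 := by
  have hcoeff (j : Fin n) : i ≠ j := (j.isLt.trans_le hi).ne'
  simp [monicOfCoeffs, coeff_X_pow, hcoeff]

end MonicOfCoeffs

lemma eval_monicOfCoeffs {R : Type*} [CommSemiring R] {n : ℕ} (a : Fin n → R) (z : R) :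
    (monicOfCoeffs a).eval z = z ^ n + ∑ i : Fin n, a i * z ^ (i : ℕ) := by
  simp [monicOfCoeffs, eval_finsetSum]

lemma norm_coeff_monicOfCoeffs_sub_le {R : Type*} [SeminormedRing R] {n : ℕ} (a b : Fin n → R)
    (i : ℕ) :
    ‖(monicOfCoeffs b).coeff i - (monicOfCoeffs a).coeff i‖ ≤ ‖b - a‖ := by
  rcases lt_or_ge i n with hi | hi
  · simpa only [coeff_monicOfCoeffs_of_lt _ hi, Pi.sub_apply] using norm_le_pi_norm (b - a) ⟨i, hi⟩
  · simp only [coeff_monicOfCoeffs_of_ge _ hi, sub_self, norm_zero, norm_nonneg]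

lemma cauchyBound_monicOfCoeffs_le {K : Type*} [NormedDivisionRing K] {n : ℕ} (a : Fin n → K) :
    (monicOfCoeffs a).cauchyBound ≤ ‖a‖₊ + 1 := by
  rw [cauchyBound, natDegree_monicOfCoeffs, (monic_monicOfCoeffs a).leadingCoeff, nnnorm_one,
    div_one]
  gcongr
  refine Finset.sup_le fun i hi ↦ ?_
  rw [coeff_monicOfCoeffs_of_lt a (Finset.mem_range.1 hi)]
  exact nnnorm_le_pi_nnnorm a _

section RootSet

variable {K : Type*} [NormedField K] {n : ℕ}

lemma norm_le_of_isRoot_monicOfCoeffs {a : Fin n → K} {z : K} (hz : (monicOfCoeffs a).IsRoot z) :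
    ‖z‖ ≤ ‖a‖ + 1 :=
  (hz.norm_lt_cauchyBound (monic_monicOfCoeffs a).ne_zero).le.trans (cauchyBound_monicOfCoeffs_le a)

lemma finite_setOfPred_isRoot_monicOfCoeffs (a : Fin n → K) :
    {z | (monicOfCoeffs a).IsRoot z}.Finite :=
  finite_setOfPred_isRoot (monic_monicOfCoeffs a).ne_zero

variable [IsAlgClosed K]

lemma exists_isRoot_monicOfCoeffs (hn : n ≠ 0) (a : Fin n → K) :
    ∃ z, (monicOfCoeffs a).IsRoot z := by
  refine IsAlgClosed.exists_root _ fun hdegree ↦ hn ?_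
  rw [← natDegree_monicOfCoeffs a, natDegree_eq_zero_iff_degree_le_zero, hdegree]

lemma exists_isRoot_monicOfCoeffs_norm_sub_lt {a b : Fin n → K} {δ : ℝ} (hab : ‖b - a‖ < δ) {z : K}
    (hz : (monicOfCoeffs a).IsRoot z) :
    ∃ w, (monicOfCoeffs b).IsRoot w ∧ ‖z - w‖ < ((n + 1) * δ) ^ (n : ℝ)⁻¹ * (‖a‖ + 1) := by
  have hδ : 0 < δ := (norm_nonneg _).trans_lt hab
  obtain ⟨w, hw, hzw⟩ := exists_roots_norm_sub_lt_of_norm_coeff_sub_lt hδ hz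
    (monic_monicOfCoeffs a) (monic_monicOfCoeffs b) (by simp only [natDegree_monicOfCoeffs])
    (fun i ↦ (norm_coeff_monicOfCoeffs_sub_le a b i).trans_lt hab) (IsAlgClosed.splits _)
  rw [natDegree_monicOfCoeffs] at hzw
  refine ⟨w, isRoot_of_mem_roots hw, hzw.trans_le ?_⟩
  gcongr
  exact max_le (norm_le_of_isRoot_monicOfCoeffs hz) (le_add_of_nonneg_left (norm_nonneg a))

lemma exists_pos_forall_isRoot_monicOfCoeffs_exists_dist_lt (hn : n ≠ 0) (M : ℝ) {ε : ℝ}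
    (hε : 0 < ε) :
    ∃ δ > 0, ∀ a b : Fin n → K, ‖a‖ ≤ M → dist b a < δ → ∀ z, (monicOfCoeffs a).IsRoot z →
      ∃ w, (monicOfCoeffs b).IsRoot w ∧ dist z w < ε := by
  have hcont : Continuous fun δ : ℝ ↦ ((n + 1) * δ) ^ (n : ℝ)⁻¹ * (M + 1) :=
    ((Real.continuous_rpow_const (by positivity)).comp (by fun_prop)).mul_const _
  have hzero : ((n + 1) * (0 : ℝ)) ^ (n : ℝ)⁻¹ * (M + 1) < ε := by
    rwa [mul_zero, Real.zero_rpow (by simpa using hn), zero_mul]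
  obtain ⟨δ, hδε, hδ : 0 < δ⟩ :=
    ((hcont.continuousAt.eventually_lt_const hzero).filter_mono nhdsWithin_le_nhds).and
      (self_mem_nhdsWithin (s := Ioi 0)) |>.exists
  refine ⟨δ, hδ, fun a b ha hab z hz ↦ ?_⟩
  obtain ⟨w, hw, hzw⟩ :=
    exists_isRoot_monicOfCoeffs_norm_sub_lt ((dist_eq_norm b a).symm.trans_lt hab) hz
  refine ⟨w, hw, (dist_eq_norm z w).trans_lt (hzw.trans_le ?_) |>.trans hδε⟩
  gcongr

lemma lowerHemicontinuous_setOfPred_isRoot_monicOfCoeffs (hn : n ≠ 0) :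
    LowerHemicontinuous fun a : Fin n → K ↦ {z | (monicOfCoeffs a).IsRoot z} := by
  refine fun a ↦ lowerHemicontinuousAt_iff.2 ?_
  rintro u hu ⟨z, hz, hzu⟩
  obtain ⟨ε, hε, hball⟩ := Metric.isOpen_iff.1 hu z hzu
  obtain ⟨δ, hδ, hroots⟩ :=
    exists_pos_forall_isRoot_monicOfCoeffs_exists_dist_lt (K := K) hn ‖a‖ hε
  filter_upwards [Metric.ball_mem_nhds a hδ] with b hb
  obtain ⟨w, hw, hzw⟩ := hroots a b le_rfl hb z hz
  exact ⟨w, hw, hball (Metric.mem_ball'.2 hzw)⟩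

lemma upperHemicontinuous_setOfPred_isRoot_monicOfCoeffs (hn : n ≠ 0) :
    UpperHemicontinuous fun a : Fin n → K ↦ {z | (monicOfCoeffs a).IsRoot z} := by
  refine .of_forall_isOpen fun a u hu hsub ↦ ?_
  obtain ⟨ε, hε, hthick⟩ :=
    (finite_setOfPred_isRoot_monicOfCoeffs a).isCompact.exists_thickening_subset_open hu hsub
  obtain ⟨δ, hδ, hroots⟩ :=
    exists_pos_forall_isRoot_monicOfCoeffs_exists_dist_lt (K := K) hn (‖a‖ + 1) hε
  have hbounded : ∀ᶠ b in 𝓝 a, ‖b‖ ≤ ‖a‖ + 1 :=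
    (continuous_norm.continuousAt.eventually_lt_const (lt_add_one ‖a‖)).mono fun _ ↦ le_of_lt
  filter_upwards [hbounded, Metric.ball_mem_nhds a hδ] with b hb hba z hz
  obtain ⟨w, hw, hzw⟩ := hroots b a hb (Metric.mem_ball'.1 hba) z hz
  exact hthick (Metric.mem_thickening_iff.2 ⟨w, hw, hzw⟩)

theorem continuous_maxRootRe_general {γ : Type*} [ConditionallyCompleteLinearOrder γ]
    [TopologicalSpace γ] [OrderTopology γ] (hn : n ≠ 0) {φ : K → γ} (hφ : Continuous φ) :
    Continuous fun a : Fin n → K ↦ sSup (φ '' {z | (monicOfCoeffs a).IsRoot z}) :=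
  continuous_sSup_image_of_hemicontinuous (lowerHemicontinuous_setOfPred_isRoot_monicOfCoeffs hn)
    (upperHemicontinuous_setOfPred_isRoot_monicOfCoeffs hn) (exists_isRoot_monicOfCoeffs hn)
    (fun a ↦ (finite_setOfPred_isRoot_monicOfCoeffs a).isCompact) hφ

end RootSet

lemma maxRootRe_eq_sSup_image_re (n : ℕ) (a : Fin n → ℂ) :
    maxRootRe n a = sSup (Complex.re '' {z | (monicOfCoeffs a).IsRoot z}) := by
  simp only [maxRootRe, image, mem_ofPred_eq, IsRoot.def, eval_monicOfCoeffs, eq_comm]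

/-- For every `n ≥ 1`, the maximum of the real parts of the roots of
`zⁿ + a_{n−1}z^{n−1} + … + a₀` is a continuous function of the coefficients. -/
theorem continuous_maxRootRe (n : ℕ) (hn : 1 ≤ n) :
    Continuous (maxRootRe n) := by
  simpa only [← maxRootRe_eq_sSup_image_re] using
    continuous_maxRootRe_general (n := n) (by lia) Complex.continuous_re
end

section
/- Let S = {(x, y) ∈ ℝ² : x² + y² = 1} be the unit circle in the plane. For every nonempty subset K ⊆ S, the set (ℝ² \ S) ∪ K is path-connected. -/
/-!
A sphere cuts the space into an open ball, star-shaped about its centre, and an exterior, the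
image of `sphere × (r, ∞)` under polar coordinates. Each remains path-connected when points of
the sphere are added to it, because such a point is reached radially from either side. A single
added point then connects the two sides.
-/

open Metric Set

theorem compl_sphere_eq_ball_union_compl_closedBall {X : Type*} [PseudoMetricSpace X] (c : X)
    (r : ℝ) : (sphere c r)ᶜ = ball c r ∪ (closedBall c r)ᶜ := by
  ext x
  simp only [mem_compl_iff, mem_sphere, mem_union, mem_ball, mem_closedBall, not_le]
  exact ne_iff_lt_or_gt

section Sphere

variable {E : Type*} [NormedAddCommGroup E] [NormedSpace ℝ E] {c : E} {r : ℝ} {K : Set E}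

theorem starConvex_ball_union (hr : 0 < r) (hK : K ⊆ closedBall c r) :
    StarConvex ℝ c (ball c r ∪ K) := by
  rw [starConvex_iff_segment_subset]
  intro x hx
  have hxr : dist c x ≤ r := by
    rw [dist_comm]
    exact union_subset ball_subset_closedBall hK hx
  rw [segment_eq_image_lineMap]
  rintro _ ⟨t, ⟨ht0, ht1⟩, rfl⟩
  obtain rfl | ht1 := ht1.eq_or_lt
  · simpa only [AffineMap.lineMap_apply_one] using hx
  · left
    calc dist (AffineMap.lineMap c x t) c = t * dist c x := by
          rw [dist_lineMap_left, Real.norm_of_nonneg ht0]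
      _ ≤ t * r := by gcongr
      _ < r := mul_lt_of_lt_one_left hr ht1

theorem isPathConnected_ball_union (hr : 0 < r) (hK : K ⊆ closedBall c r) :
    IsPathConnected (ball c r ∪ K) :=
  (starConvex_ball_union hr hK).isPathConnected (Or.inl (mem_ball_self hr))

theorem compl_closedBall_eq_image_polar (c : E) (hr : 0 ≤ r) :
    (closedBall c r)ᶜ = (fun p : E × ℝ ↦ c + p.2 • p.1) '' (sphere 0 1 ×ˢ Ioi r) := by
  ext x
  rw [mem_compl_iff, mem_closedBall_iff_norm, not_le]
  constructor
  · intro hx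
    have hne : ‖x - c‖ ≠ 0 := (hr.trans_lt hx).ne'
    refine ⟨(‖x - c‖⁻¹ • (x - c), ‖x - c‖), ⟨?_, hx⟩, ?_⟩
    · simp [norm_smul, hne]
    · simp [smul_smul, hne]
  · rintro ⟨⟨u, t⟩, ⟨hu, ht : r < t⟩, rfl⟩
    have hu : ‖u‖ = 1 := by simpa using hu
    simpa [norm_smul, hu] using ht.trans_le (le_abs_self t)

theorem isPathConnected_compl_closedBall (hE : 1 < Module.rank ℝ E) (c : E) (r : ℝ) :
    IsPathConnected (closedBall c r)ᶜ := by
  obtain hr | hr := lt_or_ge r 0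
  · rw [closedBall_eq_empty.2 hr, compl_empty]
    exact isPathConnected_univ
  · rw [compl_closedBall_eq_image_polar c hr]
    have hray : IsPathConnected (Ioi r) := (convex_Ioi r).isPathConnected nonempty_Ioi
    exact ((isPathConnected_sphere hE 0 zero_le_one).prod hray).image (by fun_prop)

theorem lineMap_mem_compl_closedBall {x : E} {t : ℝ} (hr : 0 < r) (hx : x ∈ sphere c r)
    (ht : 1 < t) : AffineMap.lineMap c x t ∈ (closedBall c r)ᶜ := by
  rw [mem_compl_iff, mem_closedBall, not_le, dist_lineMap_left, dist_comm, mem_sphere.1 hx,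
    Real.norm_of_nonneg (zero_le_one.trans ht.le)]
  exact lt_mul_of_one_lt_left hr ht

theorem joinedIn_compl_closedBall_union {x : E} (hr : 0 < r) (hx : x ∈ sphere c r) (hxK : x ∈ K) :
    JoinedIn ((closedBall c r)ᶜ ∪ K) x (AffineMap.lineMap c x (2 : ℝ)) := by
  apply JoinedIn.of_segment_subset
  have hseg : segment ℝ x (AffineMap.lineMap c x (2 : ℝ)) =
      AffineMap.lineMap c x '' Icc (1 : ℝ) 2 := by
    rw [← segment_eq_Icc one_le_two, image_segment, AffineMap.lineMap_apply_one]
  rw [hseg]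
  rintro _ ⟨t, ⟨ht, -⟩, rfl⟩
  obtain rfl | ht := ht.eq_or_lt
  · rw [AffineMap.lineMap_apply_one]
    exact Or.inr hxK
  · exact Or.inl (lineMap_mem_compl_closedBall hr hx ht)

theorem isPathConnected_compl_closedBall_union (hE : 1 < Module.rank ℝ E) (hr : 0 < r)
    (hK : K ⊆ sphere c r) : IsPathConnected ((closedBall c r)ᶜ ∪ K) := by
  have hext := isPathConnected_compl_closedBall hE c r
  obtain ⟨y, hy⟩ := hext.nonempty
  have joined_of_mem_ext : ∀ x ∈ (closedBall c r)ᶜ, JoinedIn ((closedBall c r)ᶜ ∪ K) y x :=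
    fun x hx ↦ (hext.joinedIn y hy x hx).mono subset_union_left
  refine ⟨y, Or.inl hy, ?_⟩
  rintro x (hx | hx)
  · exact joined_of_mem_ext x hx
  · exact (joined_of_mem_ext _ (lineMap_mem_compl_closedBall hr (hK hx) one_lt_two)).trans
      (joinedIn_compl_closedBall_union hr (hK hx) hx).symm

theorem pathConnected_compl_circle_union_general (hE : 1 < Module.rank ℝ E) (hr : 0 < r)
    (hK : K ⊆ sphere c r) (hne : K.Nonempty) : IsPathConnected ((sphere c r)ᶜ ∪ K) := by
  rw [compl_sphere_eq_ball_union_compl_closedBall, union_union_distrib_right]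
  exact (isPathConnected_ball_union hr (hK.trans sphere_subset_closedBall)).union
    (isPathConnected_compl_closedBall_union hE hr hK)
    (hne.mono (subset_inter subset_union_right subset_union_right))

end Sphere

-- The norm of `ℝ × ℝ` is the sup norm, so the Euclidean circle is taken from `ℂ`.
theorem equivRealProdCLM_preimage_circle :
    Complex.equivRealProdCLM.toHomeomorph ⁻¹' {p : ℝ × ℝ | p.1 ^ 2 + p.2 ^ 2 = 1} =
      sphere (0 : ℂ) 1 := by
  ext z
  rw [mem_sphere_zero_iff_norm, ← pow_eq_one_iff_of_nonneg (norm_nonneg z) two_ne_zero,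
    Complex.sq_norm, Complex.normSq_apply, ← sq, ← sq]
  rfl

/-- Let `S` be the unit circle in the plane. For every nonempty `K ⊆ S`, the set
`(ℝ² \ S) ∪ K` is path-connected. -/
theorem pathConnected_compl_circle_union (K : Set (ℝ × ℝ))
    (hK : K ⊆ {p : ℝ × ℝ | p.1 ^ 2 + p.2 ^ 2 = 1}) (hne : K.Nonempty) :
    IsPathConnected ({p : ℝ × ℝ | p.1 ^ 2 + p.2 ^ 2 = 1}ᶜ ∪ K) := by
  let e := Complex.equivRealProdCLM.toHomeomorph
  have hrank : 1 < Module.rank ℝ ℂ := Complex.rank_real_complex ▸ Cardinal.one_lt_two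
  rw [← e.isPathConnected_preimage, preimage_union, preimage_compl,
    equivRealProdCLM_preimage_circle]
  exact pathConnected_compl_circle_union_general hrank one_pos
    (equivRealProdCLM_preimage_circle ▸ preimage_mono hK) (hne.preimage e.surjective)
end
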